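/- Fix j ∈ {2, …, n−1}. For i = j−1, …, n−1 let f_i ∈ K[z_{i+1}, …, z_n], and set α = (z_{n−1} − f_{n−1})(z_{n−2} − f_{n−2})⋯(z_j − f_j) and β = z_{j−1} − f_{j−1}. Let h_1, …, h_l ∈ K[z_n] with h_1 | h_2 | ⋯ | h_l, let V be a unimodular l×l matrix whose entries do not involve the variable z_{j−1}, and set B = diag(h_1, …, h_{l−1}, h_l·α) · V · diag(1, …, 1, β). If for every k = 1, …, l−1 the product h_1⋯h_k is a greatest common divisor of the k×k minors of B and J_k(B) = R, then B is equivalent to diag(h_1, h_2, …, h_{l−1}, h_l·α·β). -/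

import Mathlib

open MvPolynomial Matrix

section Defs

variable {A : Type*} [CommRing A]

/-- The set of all `k × k` minors of a matrix. -/
def minorsSet {l m : ℕ} (F : Matrix (Fin l) (Fin m) A) (k : ℕ) : Set A :=
  { p | ∃ (r : Fin k ↪ Fin l) (c : Fin k ↪ Fin m), p = (F.submatrix ⇑r ⇑c).det }

/-- `d` is a greatest common divisor of the `k × k` minors of `F`. -/
def IsGcdMinors {l m : ℕ} (F : Matrix (Fin l) (Fin m) A) (k : ℕ) (d : A) : Prop :=
  (∀ p ∈ minorsSet F k, d ∣ p) ∧ ∀ e : A, (∀ p ∈ minorsSet F k, e ∣ p) → e ∣ d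

/-- The ideal generated by the `k × k` reduced minors of `F`, relative to a gcd `d`
of the `k × k` minors (the reduced minors are the `v` with `d * v` a minor). -/
def reducedIdeal {l m : ℕ} (F : Matrix (Fin l) (Fin m) A) (k : ℕ) (d : A) : Ideal A :=
  Ideal.span { v : A | d * v ∈ minorsSet F k }

/-- `J_k(F) = R`: the `k × k` reduced minors of `F` generate the unit ideal. -/
def JkUnit {l m : ℕ} (F : Matrix (Fin l) (Fin m) A) (k : ℕ) : Prop :=
  ∃ d : A, IsGcdMinors F k d ∧ reducedIdeal F k d = ⊤

/-- `F` has rank `r`: some `r × r` minor is nonzero and all `(r+1) × (r+1)` minors vanish. -/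
def HasRank {l m : ℕ} (F : Matrix (Fin l) (Fin m) A) (r : ℕ) : Prop :=
  (∃ p ∈ minorsSet F r, p ≠ 0) ∧ ∀ p ∈ minorsSet F (r + 1), p = 0

/-- Equivalence of matrices: `F₁ = U * F₂ * V` for unimodular `U`, `V`. -/
def MatEquiv {l m : ℕ} (F₁ F₂ : Matrix (Fin l) (Fin m) A) : Prop :=
  ∃ (U : Matrix (Fin l) (Fin l) A) (V : Matrix (Fin m) (Fin m) A),
    IsUnit U.det ∧ IsUnit V.det ∧ F₁ = U * F₂ * V

/-- The rectangular diagonal matrix with diagonal entries `Φ`. -/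
def smithDiag {l m : ℕ} (Φ : Fin l → A) : Matrix (Fin l) (Fin m) A :=
  Matrix.of fun i j => if (i : ℕ) = (j : ℕ) then Φ i else 0

/-- `F` (of rank `r`) is equivalent to its Smith form: there are diagonal entries `Φ` such that
for each `i ≤ r` the product `Φ_1 ⋯ Φ_i` is a gcd of the `i × i` minors of `F`
(i.e. `Φ_i = d_i(F)/d_{i-1}(F)`), `Φ_i = 0` for `i > r`, and `F` is equivalent to
the diagonal matrix with entries `Φ`. -/
def SmithEquivAt {l m : ℕ} (F : Matrix (Fin l) (Fin m) A) (r : ℕ) : Prop :=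
  ∃ Φ : Fin l → A,
    (∀ i : Fin l, (i : ℕ) < r →
      IsGcdMinors F ((i : ℕ) + 1) (∏ j ∈ Finset.Iic i, Φ j)) ∧
    (∀ i : Fin l, r ≤ (i : ℕ) → Φ i = 0) ∧
    MatEquiv F (smithDiag Φ)

/-- `F` is equivalent to its Smith form. -/
def EquivToSmith {l m : ℕ} (F : Matrix (Fin l) (Fin m) A) : Prop :=
  ∃ r : ℕ, HasRank F r ∧ SmithEquivAt F r

end Defs

namespace QS

/-! ### Arithmetic in unique factorization domains -/

/-- Avoiding common prime factors. -/
theorem gcdTrick₂ {D : Type*} [CommRing D] [IsDomain D] [UniqueFactorizationMonoid D]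
    (d : D) (hd : d ≠ 0) (a b : D) :
    ∃ c : D, ∀ ρ : D, Prime ρ → ρ ∣ d → ρ ∣ a + c * b → ρ ∣ a ∧ ρ ∣ b := by
  classical
  obtain ⟨s, hs, hsd⟩ := UniqueFactorizationMonoid.exists_prime_factors d hd
  refine ⟨(s.filter (fun p => ¬ p ∣ a)).prod, fun ρ hρ hρd hρab => ?_⟩
  have hρs : ∃ p ∈ s, Associated ρ p := by
    have : ρ ∣ s.prod := hρd.trans hsd.symm.dvd
    obtain ⟨p, hp, hpd⟩ := hρ.exists_mem_multiset_dvd this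
    exact ⟨p, hp, hρ.associated_of_dvd (hs p hp) hpd⟩
  by_cases hρa : ρ ∣ a
  · refine ⟨hρa, ?_⟩
    have h1 : ρ ∣ (s.filter (fun p => ¬ p ∣ a)).prod * b := (dvd_add_right hρa).1 hρab
    rcases hρ.dvd_or_dvd h1 with h2 | h2
    · obtain ⟨p, hp, hpd⟩ := hρ.exists_mem_multiset_dvd h2
      rw [Multiset.mem_filter] at hp
      exact absurd ((hρ.associated_of_dvd (hs p hp.1) hpd).symm.dvd.trans hρa) hp.2
    · exact h2
  · exfalso
    obtain ⟨p, hp, hpa⟩ := hρs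
    have hpd : ¬ p ∣ a := fun h => hρa (hpa.dvd.trans h)
    have h3 : ρ ∣ (s.filter (fun p => ¬ p ∣ a)).prod :=
      hpa.dvd.trans (Multiset.dvd_prod (Multiset.mem_filter.2 ⟨hp, hpd⟩))
    exact hρa ((dvd_add_left (h3.mul_right b)).1 hρab)

theorem gcdTrick {D : Type*} [CommRing D] [IsDomain D] [UniqueFactorizationMonoid D]
    {ι : Type*} [DecidableEq ι] (d : D) (hd : d ≠ 0) (a : D) (u : ι → D) (s : Finset ι) :
    ∃ c : ι → D, (∀ b, b ∉ s → c b = 0) ∧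
      ∀ ρ : D, Prime ρ → ρ ∣ d → ρ ∣ a + ∑ b ∈ s, c b * u b → ρ ∣ a ∧ ∀ b ∈ s, ρ ∣ u b := by
  induction s using Finset.induction_on with
  | empty => exact ⟨0, by simp, by simp⟩
  | insert b s hb ih =>
    obtain ⟨c, hc0, hc⟩ := ih
    obtain ⟨e, he⟩ := gcdTrick₂ d hd (a + ∑ b ∈ s, c b * u b) (u b)
    refine ⟨Function.update c b e, ?_, ?_⟩
    · intro b' hb'
      rw [Finset.mem_insert, not_or] at hb'
      rw [Function.update_of_ne hb'.1]
      exact hc0 _ hb'.2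
    · intro ρ hρ hρd hsum
      have h1 : ∑ x ∈ s, Function.update c b e x * u x = ∑ x ∈ s, c x * u x := by
        refine Finset.sum_congr rfl fun x hx => ?_
        rw [Function.update_of_ne]
        rintro rfl; exact hb hx
      rw [Finset.sum_insert hb, h1, Function.update_self] at hsum
      obtain ⟨h2, h3⟩ := he ρ hρ hρd (by convert hsum using 1; ring)
      obtain ⟨h4, h5⟩ := hc ρ hρ hρd h2
      refine ⟨h4, fun x hx => ?_⟩
      rcases Finset.mem_insert.1 hx with rfl | hx
      · exact h3
      · exact h5 x hx

/-- `I` is nonzero and contained in no principal prime. -/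
def H2 {D : Type*} [CommRing D] (I : Ideal D) : Prop :=
  I ≠ ⊥ ∧ ∀ ρ : D, Prime ρ → ∃ p ∈ I, ¬ ρ ∣ p

theorem H2_leadingCoeff {D : Type*} [CommRing D] [IsDomain D] [UniqueFactorizationMonoid D]
    (I : Ideal (Polynomial D)) (hI : H2 I) : H2 I.leadingCoeff := by
  classical
  refine ⟨?_, ?_⟩
  · obtain ⟨p, hp, hp0⟩ := Submodule.exists_mem_ne_zero_of_ne_bot hI.1
    intro h
    have := (I.mem_leadingCoeff p.leadingCoeff).2 ⟨p, hp, rfl⟩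
    rw [h] at this
    exact hp0 (Polynomial.leadingCoeff_eq_zero.1 (by simpa using this))
  · intro ρ hρ
    by_contra! hcon
    let S : Submonoid (Polynomial D) :=
      { carrier := {p | ¬ ρ ∣ p.leadingCoeff}
        one_mem' := by
          simp only [Set.mem_ofPred_eq, Polynomial.leadingCoeff_one]
          exact fun h => hρ.not_isUnit (isUnit_of_dvd_one h)
        mul_mem' := by
          intro a b ha hb
          simp only [Set.mem_ofPred_eq, Polynomial.leadingCoeff_mul] at *
          exact fun h => (hρ.dvd_or_dvd h).elim ha hb }
    have hdis : Disjoint (I : Set (Polynomial D)) S := by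
      rw [Set.disjoint_left]
      intro p hp hpS
      exact hpS (hcon _ ((I.mem_leadingCoeff _).2 ⟨p, hp, rfl⟩))
    obtain ⟨P, hP, hIP, hPS⟩ := Ideal.exists_le_prime_disjoint I S hdis
    have hlc : ∀ p ∈ P, ρ ∣ p.leadingCoeff := by
      intro p hp
      by_contra h
      exact Set.disjoint_left.1 hPS hp h
    have key : ∃ c : D, c ≠ 0 ∧ Polynomial.C c ∈ P := by
      by_contra! hno
      have hPb : P ≠ ⊥ := fun h => hI.1 (le_bot_iff.1 (h ▸ hIP))
      obtain ⟨f, hfP, hf⟩ := hP.exists_mem_prime_of_ne_bot hPb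
      obtain ⟨g, hgI, hfg⟩ := hI.2 f hf
      have hdeg : f.natDegree ≠ 0 := by
        intro h0
        rw [Polynomial.eq_C_of_natDegree_eq_zero h0] at hfP hf
        exact hno _ (by rintro h; rw [h] at hf; simpa using hf.ne_zero) hfP
      have hprim : f.IsPrimitive := hf.irreducible.isPrimitive hdeg
      have hirr := (hprim.irreducible_iff_irreducible_map_fraction_map
        (K := FractionRing D)).1 hf.irreducible
      have hnd : ¬ f.map (algebraMap D (FractionRing D)) ∣ g.map (algebraMap D (FractionRing D)) :=
        fun h => hfg (hprim.dvd_of_fraction_map_dvd_fraction_map h)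
      have hcop := hirr.coprime_iff_not_dvd.2 hnd
      have hinj : Function.Injective (algebraMap D (FractionRing D)) :=
        IsFractionRing.injective D (FractionRing D)
      have hres : Polynomial.resultant f g f.natDegree g.natDegree ≠ 0 := by
        intro h0
        have h1 := Polynomial.resultant_map_map (m := f.natDegree) (n := g.natDegree) f g
          (algebraMap D (FractionRing D))
        rw [h0, map_zero] at h1
        have h2 := (Polynomial.resultant_eq_zero_iff
          (f := f.map (algebraMap D (FractionRing D)))
          (g := g.map (algebraMap D (FractionRing D)))).1 (by
            rw [Polynomial.natDegree_map_eq_of_injective hinj,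
              Polynomial.natDegree_map_eq_of_injective hinj]; exact h1)
        exact h2.2 hcop
      obtain ⟨p, q, -, -, hpq⟩ := Polynomial.exists_mul_add_mul_eq_C_resultant f g
        (le_refl f.natDegree) (le_refl g.natDegree) (Or.inl hdeg)
      refine hno _ hres ?_
      rw [← hpq]
      exact P.add_mem (P.mul_mem_right _ hfP) (P.mul_mem_right _ (hIP hgI))
    obtain ⟨c, hc0, hcP⟩ := key
    have hρP : Polynomial.C ρ ∈ P := by
      have hcomap : (P.comap (Polynomial.C : D →+* Polynomial D)).IsPrime := inferInstance
      have hne : P.comap (Polynomial.C : D →+* Polynomial D) ≠ ⊥ := by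
        intro h
        have : c ∈ P.comap (Polynomial.C : D →+* Polynomial D) := hcP
        rw [h] at this
        exact hc0 (by simpa using this)
      obtain ⟨σ, hσP, hσ⟩ := hcomap.exists_mem_prime_of_ne_bot hne
      have h1 := hlc _ hσP
      rw [Polynomial.leadingCoeff_C] at h1
      have h2 := hρ.associated_of_dvd hσ h1
      obtain ⟨x, hx⟩ := h2.symm.dvd
      rw [hx, map_mul]
      exact P.mul_mem_right _ hσP
    have hall : ∀ n : ℕ, ∀ p ∈ P, p.natDegree = n → Polynomial.C ρ ∣ p := by
      intro n
      induction n using Nat.strong_induction_on with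
      | _ n ih =>
        intro p hp hn
        obtain ⟨e, he⟩ := hlc p hp
        have hlead : Polynomial.C ρ ∣ Polynomial.C p.leadingCoeff * Polynomial.X ^ p.natDegree := by
          rw [he, map_mul, mul_assoc]; exact dvd_mul_right _ _
        have hsplit := p.eraseLead_add_C_mul_X_pow
        have hmem : p.eraseLead ∈ P := by
          have : p.eraseLead = p - Polynomial.C p.leadingCoeff * Polynomial.X ^ p.natDegree := by
            rw [eq_sub_iff_add_eq]; exact hsplit
          rw [this]
          exact P.sub_mem hp (P.mem_of_dvd hlead hρP)
        rw [← hsplit]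
        refine dvd_add ?_ hlead
        rcases p.eraseLead_natDegree_lt_or_eraseLead_eq_zero with hlt | h0
        · exact ih _ (hn ▸ hlt) _ hmem rfl
        · rw [h0]; exact dvd_zero _
    obtain ⟨g, hgI, hg⟩ := hI.2 (Polynomial.C ρ) (Polynomial.prime_C_iff.2 hρ)
    exact hg (hall _ g (hIP hgI) rfl)

end QS

namespace QS

/-! ### The transformation relation -/

section TransSec
variable {A : Type*} [CommRing A] {ι : Type*} [Fintype ι] [DecidableEq ι]

/-- The row v equals u times P, where P is invertible and P conjugates through the diagonal. -/
def Trans (η : ι → A) (u v : ι → A) : Prop :=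
  ∃ P P' Q Q' : Matrix ι ι A, P * Q = 1 ∧ Q * P = 1 ∧ P' * Q' = 1 ∧ Q' * P' = 1 ∧
    P * diagonal η = diagonal η * P' ∧ u ᵥ* P = v

theorem Trans.refl (η : ι → A) (u : ι → A) : Trans η u u :=
  ⟨1, 1, 1, 1, by simp, by simp, by simp, by simp, by simp, by simp⟩

theorem Trans.symm {η u v : ι → A} (h : Trans η u v) : Trans η v u := by
  obtain ⟨P, P', Q, Q', h1, h2, h3, h4, h5, h6⟩ := h
  refine ⟨Q, Q', P, P', h2, h1, h4, h3, ?_, ?_⟩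
  · calc Q * diagonal η = Q * diagonal η * (P' * Q') := by rw [h3, mul_one]
      _ = Q * (diagonal η * P') * Q' := by simp only [mul_assoc]
      _ = Q * (P * diagonal η) * Q' := by rw [h5]
      _ = (Q * P) * diagonal η * Q' := by simp only [mul_assoc]
      _ = diagonal η * Q' := by rw [h2, one_mul]
  · rw [← h6, vecMul_vecMul, h1, vecMul_one]

theorem Trans.trans {η u v w : ι → A} (h : Trans η u v) (k : Trans η v w) : Trans η u w := by
  obtain ⟨P, P', Q, Q', h1, h2, h3, h4, h5, h6⟩ := h
  obtain ⟨R, R', S, S', k1, k2, k3, k4, k5, k6⟩ := k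
  refine ⟨P * R, P' * R', S * Q, S' * Q', ?_, ?_, ?_, ?_, ?_, ?_⟩
  · rw [mul_assoc, ← mul_assoc R, k1, one_mul, h1]
  · rw [mul_assoc, ← mul_assoc Q, h2, one_mul, k2]
  · rw [mul_assoc, ← mul_assoc R', k3, one_mul, h3]
  · rw [mul_assoc, ← mul_assoc Q', h4, one_mul, k4]
  · rw [mul_assoc, k5, ← mul_assoc, h5, mul_assoc]
  · rw [← vecMul_vecMul, h6, k6]

theorem Trans.map {A' : Type*} [CommRing A'] (φ : A →+* A') {η u v : ι → A} (h : Trans η u v) :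
    Trans (φ ∘ η) (φ ∘ u) (φ ∘ v) := by
  obtain ⟨P, P', Q, Q', h1, h2, h3, h4, h5, h6⟩ := h
  refine ⟨P.map φ, P'.map φ, Q.map φ, Q'.map φ, ?_, ?_, ?_, ?_, ?_, ?_⟩
  · rw [← Matrix.map_mul, h1]; simp
  · rw [← Matrix.map_mul, h2]; simp
  · rw [← Matrix.map_mul, h3]; simp
  · rw [← Matrix.map_mul, h4]; simp
  · have := congrArg (fun M : Matrix ι ι A => M.map φ) h5
    simpa [Matrix.map_mul, Matrix.diagonal_map, Function.comp_def] using this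
  · ext i
    rw [← h6]
    simp [vecMul, dotProduct]

/-- Unimodular rows. -/
def Uni (u : ι → A) : Prop := ∃ y : ι → A, u ⬝ᵥ y = 1

theorem Trans.uni {η u v : ι → A} (h : Trans η u v) (hu : Uni u) : Uni v := by
  obtain ⟨P, P', Q, Q', h1, h2, h3, h4, h5, h6⟩ := h
  obtain ⟨y, hy⟩ := hu
  refine ⟨Q *ᵥ y, ?_⟩
  rw [← h6, dotProduct_mulVec, vecMul_vecMul, h1, vecMul_one, hy]

theorem Trans.dvd {η u v : ι → A} (h : Trans η u v) {d : A} (hu : ∀ b, d ∣ η b * u b) :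
    ∀ b, d ∣ η b * v b := by
  obtain ⟨P, P', Q, Q', h1, h2, h3, h4, h5, h6⟩ := h
  intro b
  have : η b * v b = ∑ a, η a * u a * P' a b := by
    rw [← h6]
    simp only [vecMul, dotProduct, Finset.mul_sum]
    refine Finset.sum_congr rfl fun a _ => ?_
    have := congrFun (congrFun h5 a) b
    simp only [mul_diagonal, diagonal_mul] at this
    linear_combination u a * this
  rw [this]
  exact Finset.dvd_sum fun a _ => (hu a).mul_right _

theorem Uni.map {A' : Type*} [CommRing A'] (φ : A →+* A') {u : ι → A} (h : Uni u) :
    Uni (φ ∘ u) := by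
  obtain ⟨y, hy⟩ := h
  refine ⟨φ ∘ y, ?_⟩
  have := congrArg φ hy
  simpa [dotProduct] using this

theorem vecMul_single' (u : ι → A) (i j : ι) (x : A) :
    u ᵥ* single i j x = Pi.single j (u i * x) := by
  ext k
  simp only [vecMul, dotProduct, single_apply, Pi.single_apply]
  by_cases h : j = k
  · subst h; simp
  · simp [h, Ne.symm h]

/-- General rank one transformation. -/
theorem trans_rankOne (η : ι → A) (u : ι → A) (c d c' d' : ι → A) (h0 : d ⬝ᵥ c = 0)
    (h0' : d' ⬝ᵥ c' = 0)
    (h : ∀ i j, c i * d j * η j = η i * (c' i * d' j)) :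
    Trans η u (u + (u ⬝ᵥ c) • d) := by
  have aux : ∀ (c d : ι → A), d ⬝ᵥ c = 0 → vecMulVec c d * vecMulVec c d = 0 := by
    intro c d h
    rw [vecMulVec_mul_vecMulVec]
    simp [h]
  refine ⟨1 + vecMulVec c d, 1 + vecMulVec c' d', 1 - vecMulVec c d, 1 - vecMulVec c' d',
    ?_, ?_, ?_, ?_, ?_, ?_⟩
  · have := aux c d h0; noncomm_ring; simp [this]
  · have := aux c d h0; noncomm_ring; simp [this]
  · have := aux c' d' h0'; noncomm_ring; simp [this]
  · have := aux c' d' h0'; noncomm_ring; simp [this]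
  · rw [add_mul, mul_add, one_mul, mul_one]
    congr 1
    ext i j
    simp only [mul_diagonal, diagonal_mul, vecMulVec_apply]
    exact h i j
  · rw [vecMul_add, vecMul_one, vecMul_vecMulVec]

/-- Adding a combination of the other entries to entry `j`. -/
theorem trans_addTo (η : ι → A) (u : ι → A) (j : ι) (hj : ∀ b, η b ∣ η j) (c : ι → A)
    (hc : c j = 0) : Trans η u (Function.update u j (u j + ∑ b, c b * u b)) := by
  choose e he using hj
  have := trans_rankOne η u c (Pi.single j 1) (fun b => e b * c b) (Pi.single j 1)
    (by simp [hc]) (by simp [hc]) (by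
      intro i k
      by_cases hk : k = j
      · subst hk
        simp only [Pi.single_eq_same]
        rw [he i]; ring
      · simp [hk])
  convert this using 1
  ext b
  by_cases hb : b = j
  · subst hb
    simp [dotProduct, mul_comm]
  · simp [hb]

/-- Clearing with a unit entry. -/
theorem trans_clear (η : ι → A) (u : ι → A) (j : ι) (hu : u j = 1)
    (hd : ∀ b, η j ∣ η b * u b) : Trans η u (Pi.single j 1) := by
  choose e he using hd
  have := trans_rankOne η u (Pi.single j 1) (fun b => if b = j then 0 else - u b)
    (Pi.single j 1) (fun b => if b = j then 0 else - e b) (by simp) (by simp) (by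
      intro i k
      by_cases hi : i = j
      · subst hi
        by_cases hk : k = i
        · simp [hk]
        · simp only [Pi.single_eq_same, hk, if_false]
          linear_combination - he k
      · simp [hi])
  convert this using 1
  ext b
  by_cases hb : b = j
  · subst hb
    simp [hu]
  · simp [hb, hu]

/-- Using a comaximal pair of entries with equal weights. -/
theorem trans_pair (η : ι → A) (u : ι → A) (i j : ι) (hij : i ≠ j) (hη : η i = η j)
    (hd : ∀ b, η j ∣ η b * u b)
    (hcop : IsCoprime (u i) (u j)) : Trans η u (Pi.single j 1) := by
  obtain ⟨a, b, hab⟩ := hcop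
  set p := u i
  set q := u j
  have key : Trans η u (Function.update (Function.update u i 0) j 1) := by
    set E : Matrix ι ι A := 1 - single i i 1 - single j j 1 with hE
    have e1 : ∀ x : A, single i i x * single i i 1 = single i i x := by
      intro x; simp
    let P : Matrix ι ι A := E + single i i q + single i j a + single j i (-p) + single j j b
    let Q : Matrix ι ι A := E + single i i b + single i j (-a) + single j i p + single j j q
    have hPQ : P * Q = 1 := by
      ext x y
      simp only [P, Q, hE, mul_add, add_mul, mul_sub, sub_mul, one_mul, mul_one,
        single_mul_single_same, single_mul_single_of_ne _ _ _ _ hij,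
        single_mul_single_of_ne _ _ _ _ hij.symm]
      simp only [Matrix.add_apply, Matrix.sub_apply, single_apply, one_apply, Matrix.zero_apply]
      grind
    have hQP : Q * P = 1 := mul_eq_one_comm.1 hPQ
    refine ⟨P, P, Q, Q, hPQ, hQP, hPQ, hQP, ?_, ?_⟩
    · ext x y
      simp only [mul_diagonal, diagonal_mul, P, hE]
      simp only [Matrix.add_apply, Matrix.sub_apply, single_apply, one_apply]
      grind
    · ext y
      simp only [P, hE, vecMul_add, vecMul_sub, vecMul_one, vecMul_single', Pi.add_apply,
        Pi.sub_apply, Function.update_apply]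
      simp only [Pi.single_apply]
      grind
  refine key.trans (trans_clear _ _ j (by simp) (key.dvd hd))

end TransSec
end QS

namespace QS

/-! ### Changing variables to get a monic element -/

/-- Every ideal of `C[X]` of height two becomes an ideal with a monic element
after a change of variables. -/
def Mon (B C : Type*) [CommRing B] [CommRing C] [Algebra B C] : Prop :=
  ∀ I : Ideal (Polynomial C), H2 I →
    ∃ φ : Polynomial C ≃ₐ[B] Polynomial C, ∃ p ∈ I, (φ p).Monic

theorem mon_base (B : Type*) [CommRing B] [IsDomain B] [IsPrincipalIdealRing B] : Mon B B := by
  intro I hI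
  have h := H2_leadingCoeff I hI
  have htop : I.leadingCoeff = ⊤ := by
    obtain ⟨g, hg⟩ := (IsPrincipalIdealRing.principal I.leadingCoeff)
    rw [Ideal.submodule_span_eq] at hg
    have hg0 : g ≠ 0 := by
      rintro rfl
      apply h.1
      rw [hg]; simp
    by_contra hne
    have hgu : ¬ IsUnit g := by
      intro hu
      apply hne
      rw [hg, Ideal.span_singleton_eq_top]; exact hu
    obtain ⟨ρ, hρ, hρg⟩ := WfDvdMonoid.exists_irreducible_factor hgu hg0
    obtain ⟨p, hp, hpn⟩ := h.2 ρ hρ.prime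
    rw [hg, Ideal.mem_span_singleton] at hp
    exact hpn (hρg.trans hp)
  obtain ⟨p, hp, hp1⟩ := (I.mem_leadingCoeff 1).1 (htop ▸ Submodule.mem_top)
  exact ⟨AlgEquiv.refl, p, hp, hp1⟩

theorem monic_swap {C : Type*} [CommRing C] [Nontrivial C] (p : Polynomial (Polynomial C))
    (hp : p.leadingCoeff.Monic) (N : ℕ) (hN : ∀ i, (p.coeff i).natDegree < N) :
    (Polynomial.Bivariate.swap (p.comp (Polynomial.X + Polynomial.C (Polynomial.X ^ N)))).Monic := by
  have h1 : Polynomial.Bivariate.swap (p.comp (Polynomial.X + Polynomial.C (Polynomial.X ^ N))) =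
      ∑ i ∈ Finset.range (p.natDegree + 1), (p.coeff i).map Polynomial.C *
        (Polynomial.X ^ N + Polynomial.C Polynomial.X) ^ i := by
    rw [Polynomial.comp, Polynomial.eval₂_eq_sum_range, map_sum]
    refine Finset.sum_congr rfl fun i _ => ?_
    rw [map_mul, map_pow, map_add, Polynomial.Bivariate.swap_C, map_pow, map_pow,
      Polynomial.Bivariate.swap_X, Polynomial.Bivariate.swap_Y, add_comm]
  have hX : ∀ i, ((Polynomial.X ^ N + Polynomial.C Polynomial.X :
      Polynomial (Polynomial C)) ^ i).Monic := by
    intro i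
    apply Polynomial.Monic.pow
    exact Polynomial.monic_X_pow_add_C _ (by have := hN 0; omega)
  have hXd : ∀ i, ((Polynomial.X ^ N + Polynomial.C Polynomial.X :
      Polynomial (Polynomial C)) ^ i).natDegree = N * i := by
    intro i
    rw [(Polynomial.monic_X_pow_add_C _ (by have := hN 0; omega)).natDegree_pow,
      Polynomial.natDegree_X_pow_add_C, mul_comm]
  rw [h1, Finset.sum_range_succ, add_comm]
  have hm : ((p.coeff p.natDegree).map Polynomial.C : Polynomial (Polynomial C)).Monic := hp.map _
  refine Polynomial.Monic.add_of_left (hm.mul (hX _)) ?_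
  rw [Polynomial.degree_eq_natDegree (hm.mul (hX _)).ne_zero, hm.natDegree_mul (hX _), hXd]
  refine lt_of_le_of_lt (Polynomial.degree_sum_le _ _) ?_
  rw [Finset.sup_lt_iff (WithBot.bot_lt_coe _)]
  intro i hi
  rw [Finset.mem_range] at hi
  refine lt_of_le_of_lt Polynomial.degree_le_natDegree ?_
  rw [Nat.cast_lt]
  refine lt_of_le_of_lt Polynomial.natDegree_mul_le ?_
  rw [hXd]
  have h2 : ((p.coeff i).map Polynomial.C : Polynomial (Polynomial C)).natDegree < N :=
    lt_of_le_of_lt Polynomial.natDegree_map_le (hN i)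
  have h3 : N * (i + 1) ≤ N * p.natDegree := Nat.mul_le_mul_left _ hi
  rw [Nat.mul_add] at h3
  omega

theorem mon_step (B C : Type*) [CommRing B] [CommRing C] [Algebra B C] [IsDomain C]
    [UniqueFactorizationMonoid C] (h : Mon B C) : Mon B (Polynomial C) := by
  intro I hI
  obtain ⟨φ, c, hc, hm⟩ := h _ (H2_leadingCoeff I hI)
  obtain ⟨p, hp, rfl⟩ := (I.mem_leadingCoeff c).1 hc
  set p1 := Polynomial.mapAlgEquiv φ p with hp1
  have hlc : p1.leadingCoeff = φ p.leadingCoeff := by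
    rw [hp1]
    exact Polynomial.leadingCoeff_map_of_injective (f := (φ : Polynomial C →+* Polynomial C))
      φ.injective p
  obtain ⟨N, hN⟩ : ∃ N, ∀ i, (p1.coeff i).natDegree < N := by
    refine ⟨(p1.support.sup fun i => (p1.coeff i).natDegree) + 1, fun i => ?_⟩
    rw [Nat.lt_succ_iff]
    by_cases hi : p1.coeff i = 0
    · rw [hi]; simp
    · exact Finset.le_sup (f := fun i => (p1.coeff i).natDegree) (Polynomial.mem_support_iff.2 hi)
  refine ⟨((Polynomial.mapAlgEquiv φ).trans ((Polynomial.algEquivAevalXAddC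
    (Polynomial.X ^ N : Polynomial C)).restrictScalars B)).trans
    ((Polynomial.Bivariate.swap (R := C)).restrictScalars B), p, hp, ?_⟩
  have := monic_swap p1 (hlc ▸ hm) N hN
  exact this

end QS

namespace QS

/-! ### The local case -/

theorem isCoprime_lift {L : Type*} [CommRing L] [IsLocalRing L] (f g : Polynomial L)
    (hf : f.Monic) (h : IsCoprime (f.map (IsLocalRing.residue L)) (g.map (IsLocalRing.residue L))) :
    IsCoprime f g := by
  rw [← Polynomial.isUnit_resultant_iff_isCoprime hf]
  apply isUnit_of_map_unit (IsLocalRing.residue L)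
  rw [← Polynomial.resultant_map_map]
  obtain ⟨k, hk⟩ := Nat.exists_eq_add_of_le
    (Polynomial.natDegree_map_le (f := IsLocalRing.residue L) (p := g))
  rw [hk, Polynomial.resultant_add_right_deg _ _ _ _ _ le_rfl]
  have h1 : f.natDegree = (f.map (IsLocalRing.residue L)).natDegree := (hf.natDegree_map _).symm
  have h2 : (f.map (IsLocalRing.residue L)).coeff f.natDegree = 1 := by
    rw [Polynomial.coeff_map, Polynomial.coeff_natDegree, hf.leadingCoeff, map_one]
  rw [h2, one_pow, one_mul, h1, Polynomial.isUnit_resultant_iff_isCoprime (hf.map _)]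
  exact h

theorem horrocks {L : Type*} [CommRing L] [IsLocalRing L] {ι : Type*} [Fintype ι] [DecidableEq ι]
    (η : ι → Polynomial L) (i1 i2 : ι) (h12 : i1 ≠ i2) (hη : ∀ b, η b ∣ η i2)
    (hη1 : η i1 = η i2)
    (u : ι → Polynomial L) (hu : Uni u) (hm : (u i2).Monic)
    (hd : ∀ b, η i2 ∣ η b * u b) : Trans η u (Pi.single i2 1) := by
  classical
  set ρ := Polynomial.mapRingHom (IsLocalRing.residue L) with hρ
  have hρs : Function.Surjective ρ := Polynomial.map_surjective _ IsLocalRing.residue_surjective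
  obtain ⟨c, hc0, hc⟩ := gcdTrick (ρ (u i2)) (hm.map (IsLocalRing.residue L)).ne_zero (ρ (u i1))
    (fun b => ρ (u b)) (Finset.univ \ {i1, i2})
  choose c' hc' using fun b => hρs (c b)
  let c'' : ι → Polynomial L := fun b => if b ∈ (Finset.univ \ {i1, i2} : Finset ι) then c' b else 0
  have hcc : ∀ b, ρ (c'' b) = c b := by
    intro b
    by_cases hb : b ∈ (Finset.univ \ {i1, i2} : Finset ι)
    · simp only [c'', hb, if_true, hc']
    · simp only [c'', hb, if_false, map_zero, hc0 b hb]
  have t1 := trans_addTo η u i1 (by rw [hη1]; exact hη) c'' (by simp [c''])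
  refine t1.trans (trans_pair η _ i1 i2 h12 hη1 (t1.dvd hd) ?_)
  rw [Function.update_self, Function.update_of_ne h12.symm]
  refine (isCoprime_lift _ _ hm ?_).symm
  have hval : ρ (u i1 + ∑ b, c'' b * u b) =
      ρ (u i1) + ∑ b ∈ Finset.univ \ {i1, i2}, c b * ρ (u b) := by
    rw [map_add, map_sum]
    congr 1
    rw [← Finset.sum_subset (Finset.subset_univ (Finset.univ \ {i1, i2}))]
    · exact Finset.sum_congr rfl fun b _ => by rw [map_mul, hcc]
    · intro b _ hb
      rw [map_mul, hcc, hc0 b hb, zero_mul]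
  refine isCoprime_of_prime_dvd ?_ ?_
  · rintro ⟨h, -⟩
    exact (hm.map (IsLocalRing.residue L)).ne_zero h
  · intro z hz hz1 hz2
    obtain ⟨h3, h4⟩ := hc z hz hz1 (hval ▸ hz2)
    obtain ⟨y, hy⟩ := hu
    have : z ∣ ρ (u ⬝ᵥ y) := by
      rw [dotProduct, map_sum]
      refine Finset.dvd_sum fun b _ => ?_
      rw [map_mul]
      apply Dvd.dvd.mul_right
      by_cases hb1 : b = i1
      · rw [hb1]; exact h3
      by_cases hb2 : b = i2
      · rw [hb2]; exact hz1
      · exact h4 b (by simp [hb1, hb2])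
    rw [hy, map_one] at this
    exact hz.not_unit (isUnit_of_dvd_one this)

end QS

namespace QS

/-! ### Patching -/

theorem vecMul_map' {ι : Type*} [Fintype ι] {A A' : Type*} [CommRing A] [CommRing A']
    (f : A →+* A') (w : ι → A)
    (P : Matrix ι ι A) : (fun b => f (w b)) ᵥ* P.map f = fun b => f ((w ᵥ* P) b) := by
  ext1 b
  simp [vecMul, dotProduct]

theorem inter_inv {M : Type*} [Monoid M] {P P' Q Q' D : M} (h2 : Q * P = 1) (h3 : P' * Q' = 1)
    (h : P * D = D * P') : Q * D = D * Q' := by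
  calc Q * D = Q * D * (P' * Q') := by rw [h3, mul_one]
    _ = Q * (D * P') * Q' := by simp only [mul_assoc]
    _ = Q * (P * D) * Q' := by rw [h]
    _ = (Q * P) * D * Q' := by simp only [mul_assoc]
    _ = D * Q' := by rw [h2, one_mul]

section Patch
variable {C : Type*} [CommRing C] {L : Type*} [CommRing L] [Algebra C L]

/-- `C[X][Y] → L[X][Y]`. -/
noncomputable def kap (C L : Type*) [CommRing C] [CommRing L] [Algebra C L] :
    Polynomial (Polynomial C) →+* Polynomial (Polynomial L) :=
  Polynomial.mapRingHom (Polynomial.mapRingHom (algebraMap C L))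

/-- Scaling `Y` by `c`. -/
noncomputable def scl (c : L) : Polynomial (Polynomial L) →+* Polynomial (Polynomial L) :=
  Polynomial.compRingHom (Polynomial.C (Polynomial.C c) * Polynomial.X)

theorem scl_kap (c : C) (g : Polynomial (Polynomial C)) :
    kap C L (scl c g) = scl (algebraMap C L c) (kap C L g) := by
  simp only [kap, scl, Polynomial.coe_mapRingHom, Polynomial.coe_compRingHom_apply,
    Polynomial.map_comp]
  simp

theorem scl_mul (c d : L) (g : Polynomial (Polynomial L)) : scl (c * d) g = scl c (scl d g) := by
  simp only [scl, Polynomial.coe_compRingHom_apply, Polynomial.comp_assoc]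
  congr 1
  rw [Polynomial.mul_comp, Polynomial.C_comp, Polynomial.X_comp, map_mul, map_mul]
  ring

theorem desc_mul {g : Polynomial (Polynomial L)} {c : C}
    (h : ∃ g0, kap C L g0 = scl (algebraMap C L c) g) (d : C) :
    ∃ g0, kap C L g0 = scl (algebraMap C L (d * c)) g := by
  obtain ⟨g0, hg⟩ := h
  refine ⟨scl d g0, ?_⟩
  rw [scl_kap, hg, map_mul, scl_mul]

variable (S : Submonoid C) [IsLocalization S L]

theorem desc_poly (q : Polynomial L) : ∃ c ∈ S, ∃ q0 : Polynomial C,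
    q0.map (algebraMap C L) = Polynomial.C (algebraMap C L c) * q := by
  obtain ⟨b, hbS, hb⟩ := IsLocalization.integerNormalization_spec S q
  refine ⟨b, hbS, _, hb.trans ?_⟩
  rw [Algebra.smul_def, Polynomial.algebraMap_apply]

theorem desc_one (g : Polynomial (Polynomial L)) (hg : ∃ q0 : Polynomial C,
    q0.map (algebraMap C L) = g.coeff 0) :
    ∃ c ∈ S, ∃ g0, kap C L g0 = scl (algebraMap C L c) g := by
  classical
  have key : ∀ s : Finset ℕ, ∃ c ∈ S, ∃ g0, kap C L g0 =
      scl (algebraMap C L c) (∑ k ∈ s, Polynomial.monomial k (g.coeff k)) := by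
    intro s
    induction s using Finset.induction_on with
    | empty => exact ⟨1, S.one_mem, 0, by simp⟩
    | insert k s hk ih =>
      obtain ⟨c, hc, h1⟩ := ih
      obtain ⟨d, hd, h2⟩ : ∃ d ∈ S, ∃ g0, kap C L g0 =
          scl (algebraMap C L d) (Polynomial.monomial k (g.coeff k)) := by
        rcases k with _ | k
        · obtain ⟨q0, hq0⟩ := hg
          refine ⟨1, S.one_mem, Polynomial.C q0, ?_⟩
          simp [kap, scl, hq0]
        · obtain ⟨d, hd, q0, hq0⟩ := desc_poly S (g.coeff (k + 1))
          refine ⟨d, hd, Polynomial.monomial (k + 1) (Polynomial.C (d ^ k) * q0), ?_⟩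
          simp only [kap, scl, Polynomial.coe_mapRingHom, Polynomial.coe_compRingHom_apply,
            Polynomial.map_monomial, Polynomial.map_mul, hq0, Polynomial.monomial_comp, mul_pow]
          rw [← Polynomial.C_mul_X_pow_eq_monomial]
          simp only [Polynomial.map_C, map_pow, map_mul, Polynomial.map_pow]
          ring
      obtain ⟨g1, hg1⟩ := desc_mul h1 d
      obtain ⟨g2, hg2⟩ := desc_mul h2 c
      refine ⟨d * c, S.mul_mem hd hc, g2 + g1, ?_⟩
      rw [Finset.sum_insert hk, map_add, map_add, hg1, hg2, mul_comm c d]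
  have := key g.support
  rwa [← Polynomial.as_sum_support] at this

variable {ι : Type*} [Fintype ι] [DecidableEq ι]

theorem desc_mat (G : Matrix ι ι (Polynomial (Polynomial L)))
    (hG : G.map (Polynomial.evalRingHom 0) = 1) :
    ∃ c ∈ S, ∀ d : C, ∃ G0 : Matrix ι ι (Polynomial (Polynomial C)),
      G0.map (kap C L) = G.map (scl (algebraMap C L (d * c))) := by
  have h1 : ∀ x : ι × ι, ∃ c ∈ S, ∃ g0, kap C L g0 = scl (algebraMap C L c) (G x.1 x.2) := by
    intro x
    apply desc_one
    refine ⟨if x.1 = x.2 then 1 else 0, ?_⟩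
    have := congrFun (congrFun hG x.1) x.2
    rw [Matrix.map_apply, Polynomial.coe_evalRingHom, ← Polynomial.coeff_zero_eq_eval_zero] at this
    rw [this, Matrix.one_apply]
    split_ifs <;> simp
  choose c hc hg using h1
  refine ⟨∏ x, c x, S.prod_mem fun x _ => hc x, fun d => ?_⟩
  have h2 : ∀ x : ι × ι, ∃ g0, kap C L g0 =
      scl (algebraMap C L (d * ∏ x, c x)) (G x.1 x.2) := by
    intro x
    rw [← Finset.prod_erase_mul _ _ (Finset.mem_univ x), ← mul_assoc]
    exact desc_mul (hg x) _
  choose g0 hg0 using h2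
  refine ⟨Matrix.of fun a b => g0 (a, b), ?_⟩
  ext1 a b
  exact hg0 (a, b)

/-- Substitution `X ↦ X + Y`. -/
noncomputable def tau (L : Type*) [CommRing L] : Polynomial L →+* Polynomial (Polynomial L) :=
  Polynomial.eval₂RingHom (Polynomial.C.comp Polynomial.C)
    (Polynomial.C Polynomial.X + Polynomial.X)

theorem eval_tau (p : Polynomial L) : Polynomial.evalRingHom 0 (tau L p) = p := by
  have : (Polynomial.evalRingHom 0).comp (tau L) = RingHom.id _ := by
    apply Polynomial.ringHom_ext <;> simp [tau]
  exact RingHom.congr_fun this p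

theorem kap_tau (p : Polynomial C) : kap C L (tau C p) = tau L (p.map (algebraMap C L)) := by
  have : (kap C L).comp (tau C) = (tau L).comp (Polynomial.mapRingHom (algebraMap C L)) := by
    apply Polynomial.ringHom_ext <;> simp [tau, kap]
  exact RingHom.congr_fun this p

theorem kap_C (p : Polynomial C) :
    kap C L (Polynomial.C p) = Polynomial.C (p.map (algebraMap C L)) := by
  simp [kap]

theorem kap_inj (hS : S ≤ nonZeroDivisors C) : Function.Injective (kap C L) :=
  Polynomial.map_injective _ (Polynomial.map_injective _ (IsLocalization.injective L hS))

theorem patch_local (hS : S ≤ nonZeroDivisors C) (η : ι → C) (u : ι → Polynomial C) (i2 : ι)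
    (h : Trans (fun b => Polynomial.C (algebraMap C L (η b)))
      (fun b => (u b).map (algebraMap C L)) (Pi.single i2 1)) :
    ∃ c ∈ S, Trans (fun b => Polynomial.C (Polynomial.C (η b)))
      (fun b => Polynomial.C (u b)) (fun b => scl c (tau C (u b))) := by
  obtain ⟨P, P', Q, Q', h1, h2, h3, h4, h5, h6⟩ := h
  have e1 : ∀ (P : Matrix ι ι (Polynomial L)),
      (P.map Polynomial.C).map (Polynomial.evalRingHom 0) = P := by
    intro P; ext1 a b; simp
  have e2 : ∀ (P : Matrix ι ι (Polynomial L)),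
      (P.map (tau L)).map (Polynomial.evalRingHom 0) = P := by
    intro P; ext1 a b; simp only [Matrix.map_apply, eval_tau]
  have m1 : ∀ {P Q : Matrix ι ι (Polynomial L)} (f : Polynomial L →+* Polynomial (Polynomial L)),
      P * Q = 1 → P.map f * Q.map f = 1 := by
    intro P Q f h
    rw [← Matrix.map_mul, h]; simp
  have z1 : ∀ {P Q : Matrix ι ι (Polynomial L)}, P * Q = 1 →
      (P.map Polynomial.C * Q.map (tau L)).map (Polynomial.evalRingHom 0) = 1 := by
    intro P Q h
    rw [Matrix.map_mul, e1, e2, h]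
  have z2 : ∀ {P Q : Matrix ι ι (Polynomial L)}, P * Q = 1 →
      (P.map (tau L) * Q.map Polynomial.C).map (Polynomial.evalRingHom 0) = 1 := by
    intro P Q h
    rw [Matrix.map_mul, e1, e2, h]
  obtain ⟨c1, hc1, k1⟩ := desc_mat (C := C) S _ (z1 h1)
  obtain ⟨c2, hc2, k2⟩ := desc_mat (C := C) S _ (z2 h1)
  obtain ⟨c3, hc3, k3⟩ := desc_mat (C := C) S _ (z1 h3)
  obtain ⟨c4, hc4, k4⟩ := desc_mat (C := C) S _ (z2 h3)
  set c := c1 * c2 * c3 * c4 with hc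
  obtain ⟨G1, hG1⟩ := k1 (c2 * c3 * c4)
  obtain ⟨G2, hG2⟩ := k2 (c1 * c3 * c4)
  obtain ⟨G3, hG3⟩ := k3 (c1 * c2 * c4)
  obtain ⟨G4, hG4⟩ := k4 (c1 * c2 * c3)
  rw [show c2 * c3 * c4 * c1 = c by rw [hc]; ring] at hG1
  rw [show c1 * c3 * c4 * c2 = c by rw [hc]; ring] at hG2
  rw [show c1 * c2 * c4 * c3 = c by rw [hc]; ring] at hG3
  have hκ := kap_inj (L := L) S hS
  have hinj : Function.Injective
      (fun M : Matrix ι ι (Polynomial (Polynomial C)) => M.map (kap C L)) :=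
    Matrix.map_injective hκ
  have one : ∀ {P Q : Matrix ι ι (Polynomial L)} {G H : Matrix ι ι (Polynomial (Polynomial C))},
      Q * P = 1 → P * Q = 1 →
      G.map (kap C L) = (P.map Polynomial.C * Q.map (tau L)).map (scl (algebraMap C L c)) →
      H.map (kap C L) = (P.map (tau L) * Q.map Polynomial.C).map (scl (algebraMap C L c)) →
      G * H = 1 := by
    intro P Q G H hQP hPQ hG hH
    apply hinj
    simp only
    rw [Matrix.map_mul, hG, hH, ← Matrix.map_mul, mul_assoc, ← mul_assoc (Q.map (tau L)),
      m1 (tau L) hQP, one_mul, m1 Polynomial.C hPQ]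
    simp
  have o1 := one h2 h1 hG1 hG2
  have o2 := one h4 h3 hG3 hG4
  refine ⟨c, by simp only [hc]; exact S.mul_mem (S.mul_mem (S.mul_mem hc1 hc2) hc3) hc4,
    G1, G3, G2, G4, o1, mul_eq_one_comm.1 o1, o2, mul_eq_one_comm.1 o2, ?_, ?_⟩
  · apply hinj
    simp only
    have d1 : (diagonal (fun b => Polynomial.C (Polynomial.C (η b)))).map (kap C L) =
        ((diagonal (fun b => Polynomial.C (algebraMap C L (η b)))).map Polynomial.C).map
          (scl (algebraMap C L c)) := by
      simp [kap, scl, Matrix.diagonal_map]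
    have d2 : (diagonal (fun b => Polynomial.C (algebraMap C L (η b)))).map Polynomial.C =
        (diagonal (fun b => Polynomial.C (algebraMap C L (η b)))).map (tau L) := by
      simp [tau, Matrix.diagonal_map]
    have h5' : Q * diagonal (fun b => Polynomial.C (algebraMap C L (η b))) =
      diagonal (fun b => Polynomial.C (algebraMap C L (η b))) * Q' := by
      exact inter_inv h2 h3 h5
    rw [Matrix.map_mul, Matrix.map_mul, hG1, hG3, d1, ← Matrix.map_mul, ← Matrix.map_mul]
    congr 1
    rw [mul_assoc]
    conv_lhs => rw [d2]
    rw [← Matrix.map_mul, h5', Matrix.map_mul, ← d2, ← mul_assoc, ← Matrix.map_mul, h5,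
      Matrix.map_mul, mul_assoc]
  · have hu : ∀ (f : Polynomial L →+* Polynomial (Polynomial L)) (w : ι → Polynomial L)
        (P : Matrix ι ι (Polynomial L)), (fun b => f (w b)) ᵥ* P.map f = fun b => f ((w ᵥ* P) b) := by
      intro f w P
      ext1 b
      simp [vecMul, dotProduct]
    have s1 : ∀ p : Polynomial L, scl (algebraMap C L c) (Polynomial.C p) = Polynomial.C p := by
      intro p; simp [scl]
    funext b
    apply hκ
    rw [scl_kap, kap_tau]
    have := congrFun (vecMul_map' (kap C L) (fun b => Polynomial.C (u b)) G1) b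
    rw [← this, hG1]
    have k : (fun b => kap C L (Polynomial.C (u b))) = fun b => scl (algebraMap C L c)
        (Polynomial.C ((u b).map (algebraMap C L))) := by
      funext b; rw [kap_C, s1]
    rw [k, vecMul_map']
    congr 1
    rw [← vecMul_vecMul, hu Polynomial.C, h6]
    have h7 : (Pi.single i2 1 : ι → Polynomial L) ᵥ* Q = fun b => (u b).map (algebraMap C L) := by
      rw [← h6, vecMul_vecMul, h1, vecMul_one]
    have : (fun b => Polynomial.C ((Pi.single i2 1 : ι → Polynomial L) b)) =
        fun b => tau L ((Pi.single i2 1 : ι → Polynomial L) b) := by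
      funext b
      by_cases hb : b = i2
      · subst hb; simp
      · simp [hb]
    rw [this, hu (tau L), h7]

end Patch
end QS

namespace QS

universe u

section Good
universe w
variable {ι : Type w} [Fintype ι] [DecidableEq ι]

theorem patch {C : Type*} [CommRing C] [IsDomain C] (η : ι → C) (u : ι → Polynomial C) (i2 : ι)
    (hloc : ∀ (m : Ideal C) [m.IsMaximal],
      Trans (fun b => Polynomial.C (algebraMap C (Localization.AtPrime m) (η b)))
        (fun b => (u b).map (algebraMap C (Localization.AtPrime m))) (Pi.single i2 1)) :
    Trans (fun b => Polynomial.C (η b)) u (fun b => Polynomial.C ((u b).eval 0)) := by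
  let J : Ideal C :=
    { carrier := {c | ∀ a b : Polynomial C, Trans (fun i => Polynomial.C (η i))
        (fun i => Polynomial.aeval a (u i)) (fun i => Polynomial.aeval (a + Polynomial.C c * b) (u i))}
      zero_mem' := by
        intro a b
        simp only [map_zero, zero_mul, add_zero]
        exact Trans.refl _ _
      add_mem' := by
        intro c d hc hd a b
        have := (hc a b).trans (hd (a + Polynomial.C c * b) b)
        rw [map_add, add_mul, ← add_assoc]
        exact this
      smul_mem' := by
        intro r c hc a b
        have := hc a (Polynomial.C r * b)
        rw [smul_eq_mul, map_mul, mul_comm (Polynomial.C r), mul_assoc]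
        exact this }
  have hJ : J = ⊤ := by
    by_contra hne
    obtain ⟨m, hm, hJm⟩ := Ideal.exists_le_maximal J hne
    obtain ⟨c, hc, ht⟩ := patch_local (L := Localization.AtPrime m) m.primeCompl
      (Ideal.primeCompl_le_nonZeroDivisors m) η u i2 (hloc m)
    refine hc (hJm ?_)
    intro a b
    have h1 := ht.map (Polynomial.eval₂RingHom
      ((Polynomial.aeval a : Polynomial C →ₐ[C] Polynomial C) : Polynomial C →+* Polynomial C) b)
    have h2 : (Polynomial.eval₂RingHom ((Polynomial.aeval a : Polynomial C →ₐ[C] Polynomial C) :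
        Polynomial C →+* Polynomial C) b).comp ((scl c).comp (tau C)) =
        ((Polynomial.aeval (a + Polynomial.C c * b) : Polynomial C →ₐ[C] Polynomial C) :
        Polynomial C →+* Polynomial C) := by
      apply Polynomial.ringHom_ext <;> simp [tau, scl]
    convert h1 using 1
    · funext i; simp
    · funext i; simp
    · funext i
      exact (RingHom.congr_fun h2 (u i)).symm
  have h1 : (1 : C) ∈ J := hJ ▸ Submodule.mem_top
  have h2 := h1 0 Polynomial.X
  refine Trans.symm ?_
  convert h2 using 1
  · funext i
    rw [Polynomial.aeval_def, Polynomial.eval₂_at_zero, Polynomial.coeff_zero_eq_eval_zero]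
    rfl
  · funext i; simp

/-- Preparation: make two entries without common prime factors. -/
theorem prep {A : Type*} [CommRing A] [IsDomain A] [UniqueFactorizationMonoid A]
    (η : ι → A) (i0 i1 i2 : ι) (h01 : i0 ≠ i1) (h02 : i0 ≠ i2) (h12 : i1 ≠ i2)
    (hη : ∀ b, η b ∣ η i2) (hη1 : η i1 = η i2) (hη2 : η i2 ≠ 0) (u : ι → A) (hu : Uni u) :
    ∃ u', Trans η u u' ∧ H2 (Ideal.span {u' i0, u' i1}) := by
  classical
  -- step 1
  obtain ⟨u1, t1, hu1⟩ : ∃ u', Trans η u u' ∧ u' i2 ≠ 0 := by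
    by_cases h : u i2 = 0
    · obtain ⟨b, hb⟩ : ∃ b, u b ≠ 0 := by
        by_contra hne
        push Not at hne
        obtain ⟨y, hy⟩ := hu
        simp [dotProduct, hne] at hy
      have hb2 : b ≠ i2 := by rintro rfl; exact hb h
      refine ⟨_, trans_addTo η u i2 hη (Pi.single b 1) (by simp [hb2.symm]), ?_⟩
      simp [h, hb, Pi.single_apply]
    · exact ⟨u, Trans.refl _ _, h⟩
  -- step 2
  obtain ⟨u2, t2, hu2⟩ : ∃ u', Trans η u1 u' ∧ u' i0 ≠ 0 := by
    by_cases h : u1 i0 = 0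
    · obtain ⟨e, he⟩ := hη i0
      have t := trans_rankOne η u1 (Pi.single i2 e) (Pi.single i0 1) (Pi.single i2 1)
        (Pi.single i0 1) (by simp [h02.symm]) (by simp [h02.symm]) (by
          intro i j
          by_cases hi : i = i2
          · subst hi
            by_cases hj : j = i0
            · subst hj; simp [he, mul_comm]
            · simp [hj]
          · simp [hi])
      refine ⟨_, t, ?_⟩
      have he0 : e ≠ 0 := by
        rintro rfl
        exact hη2 (by simpa using he)
      simp [h, hu1, he0]
    · exact ⟨u1, Trans.refl _ _, h⟩
  have hu2' : Uni u2 := t2.uni (t1.uni hu)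
  obtain ⟨c, hc0, hc⟩ := gcdTrick (u2 i0) hu2 (u2 i1) u2 (Finset.univ \ {i0, i1})
  have t3 := trans_addTo η u2 i1 (by rw [hη1]; exact hη) c (hc0 _ (by simp))
  refine ⟨_, t1.trans (t2.trans t3), ?_, ?_⟩
  · intro h
    rw [Ideal.span_eq_bot] at h
    have := h _ (Set.mem_insert _ _)
    rw [Function.update_of_ne h01] at this
    exact hu2 this
  · intro ρ hρ
    by_contra hne
    push Not at hne
    have k0 := hne _ (Ideal.subset_span (Set.mem_insert _ _))
    have k1 := hne _ (Ideal.subset_span (Set.mem_insert_of_mem _ rfl))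
    rw [Function.update_of_ne h01] at k0
    rw [Function.update_self] at k1
    have hs : ∑ b, c b * u2 b = ∑ b ∈ Finset.univ \ {i0, i1}, c b * u2 b := by
      symm
      apply Finset.sum_subset (Finset.subset_univ _)
      intro b _ hb
      rw [hc0 b hb, zero_mul]
    rw [hs] at k1
    obtain ⟨h3, h4⟩ := hc ρ hρ k0 k1
    obtain ⟨y, hy⟩ := hu2'
    have : ρ ∣ u2 ⬝ᵥ y := by
      refine Finset.dvd_sum fun b _ => ?_
      apply Dvd.dvd.mul_right
      by_cases hb1 : b = i1
      · rw [hb1]; exact h3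
      by_cases hb2 : b = i0
      · rw [hb2]; exact k0
      · exact h4 b (by simp [hb1, hb2])
    rw [hy] at this
    exact hρ.not_unit (isUnit_of_dvd_one this)

end Good

/-- The weighted version of the Quillen-Suslin property. -/
def Good (B A : Type*) [CommRing B] [CommRing A] [Algebra B A] : Prop :=
  ∀ (ι : Type) [Fintype ι] [DecidableEq ι] (i0 i1 i2 : ι) (_ : i0 ≠ i1) (_ : i0 ≠ i2)
    (_ : i1 ≠ i2) (h : ι → B) (_ : ∀ b, h b ∣ h i2) (_ : h i1 = h i2) (_ : h i2 ≠ 0)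
    (u : ι → A) (_ : Uni u)
    (_ : ∀ b, algebraMap B A (h i2) ∣ algebraMap B A (h b) * u b),
    Trans (fun b => algebraMap B A (h b)) u (Pi.single i2 1)

theorem good_base (B : Type*) [CommRing B] [IsDomain B] [IsPrincipalIdealRing B] : Good B B := by
  intro ι _ _ i0 i1 i2 h01 h02 h12 h hη hη1 hη2 u hu hd
  simp only [Algebra.algebraMap_self, RingHom.id_apply] at *
  obtain ⟨u', t, hH⟩ := prep h i0 i1 i2 h01 h02 h12 hη hη1 hη2 u hu
  have hcop : IsCoprime (u' i0) (u' i1) := by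
    apply isCoprime_of_prime_dvd
    · rintro ⟨h1, h2⟩
      apply hH.1
      simp [h1, h2]
    · intro z hz h1 h2
      obtain ⟨p, hp, hpz⟩ := hH.2 z hz
      rw [Ideal.mem_span_pair] at hp
      obtain ⟨a, b, rfl⟩ := hp
      exact hpz (dvd_add (h1.mul_left _) (h2.mul_left _))
  obtain ⟨a, b, hab⟩ := hcop
  have t2 := trans_addTo h u' i2 hη
    (Pi.single i0 ((1 - u' i2) * a) + Pi.single i1 ((1 - u' i2) * b)) (by simp [h02.symm, h12.symm])
  refine t.trans (t2.trans (trans_clear _ _ i2 ?_ (t2.dvd (t.dvd hd))))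
  simp [add_mul, Finset.sum_add_distrib, Pi.single_apply]
  linear_combination (1 - u' i2) * hab

theorem good_step (B C : Type*) [CommRing B] [CommRing C] [Algebra B C] [IsDomain C]
    [UniqueFactorizationMonoid C] (hinj : Function.Injective (algebraMap B C))
    (hM : Mon B C) (hG : Good B C) : Good B (Polynomial C) := by
  intro ι _ _ i0 i1 i2 h01 h02 h12 h hη hη1 hη2 u hu hd
  have hη' : ∀ b, algebraMap B (Polynomial C) (h b) ∣ algebraMap B (Polynomial C) (h i2) :=
    fun b => map_dvd _ (hη b)
  have hη1' : algebraMap B (Polynomial C) (h i1) = algebraMap B (Polynomial C) (h i2) := by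
    rw [hη1]
  have hη2' : algebraMap B (Polynomial C) (h i2) ≠ 0 := by
    rw [Polynomial.algebraMap_apply]
    rw [Ne, Polynomial.C_eq_zero]
    intro h0
    exact hη2 (hinj (by rw [h0, map_zero]))
  obtain ⟨u1, t1, hH⟩ := prep (fun b => algebraMap B (Polynomial C) (h b)) i0 i1 i2 h01 h02 h12
    hη' hη1' hη2' u hu
  refine t1.trans ?_
  have hu1 := t1.uni hu
  have hd1 := t1.dvd hd
  obtain ⟨φ, p, hp, hm⟩ := hM _ hH
  rw [Ideal.mem_span_pair] at hp
  obtain ⟨a, b, hab⟩ := hp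
  suffices hs : Trans (fun b => algebraMap B (Polynomial C) (h b)) (fun b => φ (u1 b))
      (Pi.single i2 1) by
    have := hs.map (φ.symm : Polynomial C →+* Polynomial C)
    convert this using 1
    · funext b
      exact (φ.symm.commutes _).symm
    · funext b; simp
    · funext b
      by_cases hb : b = i2
      · subst hb; simp
      · simp [hb]
  have hu2 : Uni (fun b => φ (u1 b)) := hu1.map (φ : Polynomial C →+* Polynomial C)
  have hd2 : ∀ b, algebraMap B (Polynomial C) (h i2) ∣
      algebraMap B (Polynomial C) (h b) * φ (u1 b) := by
    intro b
    have := map_dvd φ (hd1 b)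
    rwa [map_mul, φ.commutes, φ.commutes] at this
  set u2 := fun b => φ (u1 b) with hu2def
  set N := (u2 i2).natDegree + 1
  have t3 := trans_addTo (fun b => algebraMap B (Polynomial C) (h b)) u2 i2 hη'
    (Pi.single i0 (Polynomial.X ^ N * φ a) + Pi.single i1 (Polynomial.X ^ N * φ b))
    (by simp [h02.symm, h12.symm])
  refine t3.trans ?_
  have hu3 := t3.uni hu2
  have hd3 := t3.dvd hd2
  set u3 := Function.update u2 i2 (u2 i2 + ∑ b_1, (Pi.single i0 (Polynomial.X ^ N * φ a) +
    Pi.single i1 (Polynomial.X ^ N * φ b) : ι → Polynomial C) b_1 * u2 b_1) with hu3def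
  have hm3 : (u3 i2).Monic := by
    have e : u3 i2 = u2 i2 + Polynomial.X ^ N * φ p := by
      simp only [hu3def, Function.update_self, Pi.add_apply, add_mul, Finset.sum_add_distrib,
        Pi.single_apply, ite_mul, zero_mul, Finset.sum_ite_eq', Finset.mem_univ, if_true, ← hab,
        map_add, map_mul, u2]
      ring
    rw [e]
    have hmm : (Polynomial.X ^ N * φ p).Monic := (Polynomial.monic_X_pow N).mul hm
    refine Polynomial.Monic.add_of_right hmm ?_
    rw [Polynomial.degree_eq_natDegree hmm.ne_zero, (Polynomial.monic_X_pow N).natDegree_mul hm]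
    refine lt_of_le_of_lt Polynomial.degree_le_natDegree ?_
    rw [Nat.cast_lt, Polynomial.natDegree_X_pow]
    omega
  have t4 := patch (fun b => algebraMap B C (h b)) u3 i2 (by
    intro m _
    have hmap : ∀ b, Polynomial.mapRingHom (algebraMap C (Localization.AtPrime m))
        (algebraMap B (Polynomial C) (h b)) =
        Polynomial.C (algebraMap C (Localization.AtPrime m) (algebraMap B C (h b))) := by
      intro b
      rw [Polynomial.algebraMap_apply]; simp
    apply horrocks _ i1 i2 h12
    · intro b
      rw [← hmap, ← hmap]
      exact map_dvd _ (hη' b)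
    · rw [hη1]
    · exact hu3.map (Polynomial.mapRingHom (algebraMap C (Localization.AtPrime m)))
    · exact hm3.map _
    · intro b
      rw [← hmap, ← hmap, ← Polynomial.coe_mapRingHom, ← map_mul]
      exact map_dvd _ (hd3 b))
  have t5 : Trans (fun b => algebraMap B C (h b)) (fun b => (u3 b).eval 0) (Pi.single i2 1) := by
    refine hG ι i0 i1 i2 h01 h02 h12 h hη hη1 hη2 _ ?_ ?_
    · exact hu3.map (Polynomial.evalRingHom 0)
    · intro b
      have := map_dvd (Polynomial.evalRingHom 0) (hd3 b)
      simpa [Polynomial.algebraMap_apply] using this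
  have t6 := t5.map Polynomial.C
  refine t4.trans ?_
  have e7 : (Pi.single i2 1 : ι → Polynomial C) = Polynomial.C ∘ (Pi.single i2 1 : ι → C) := ?_
  · rw [e7]; exact t6
  funext b
  by_cases hb : b = i2
  · subst hb; simp
  · simp [hb]

theorem good_equiv (B A A' : Type*) [CommRing B] [CommRing A] [CommRing A'] [Algebra B A]
    [Algebra B A'] (e : A ≃ₐ[B] A') (hG : Good B A') : Good B A := by
  intro ι _ _ i0 i1 i2 h01 h02 h12 h hη hη1 hη2 u hu hd
  have := (hG ι i0 i1 i2 h01 h02 h12 h hη hη1 hη2 (fun b => e (u b))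
    (hu.map (e : A →+* A')) (fun b => by
      have := map_dvd e (hd b)
      simpa using this)).map (e.symm : A' →+* A)
  convert this using 1
  · funext b; simp
  · funext b; simp
  · funext b
    by_cases hb : b = i2
    · subst hb; simp
    · simp [hb]

theorem good_all (B : Type u) [CommRing B] [IsDomain B] [IsPrincipalIdealRing B] (m : ℕ) :
    ∃ (C : Type u) (_ : CommRing C) (_ : Algebra B C), IsDomain C ∧ UniqueFactorizationMonoid C ∧
      Function.Injective (algebraMap B C) ∧
      Nonempty (MvPolynomial (Fin m) B ≃ₐ[B] C) ∧ Mon B C ∧ Good B C := by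
  induction m with
  | zero =>
    exact ⟨B, inferInstance, inferInstance, inferInstance, inferInstance, fun x y h => h,
      ⟨MvPolynomial.isEmptyAlgEquiv B (Fin 0)⟩, mon_base B, good_base B⟩
  | succ m ih =>
    obtain ⟨C, i1, i2, i3, i4, hinj, ⟨e⟩, hM, hG⟩ := ih
    refine ⟨Polynomial C, inferInstance, inferInstance, inferInstance, inferInstance, ?_,
      ⟨(MvPolynomial.finSuccEquiv B m).trans (Polynomial.mapAlgEquiv e)⟩, mon_step B C hM,
      good_step B C hinj hM hG⟩
    intro x y hxy
    rw [Polynomial.algebraMap_apply, Polynomial.algebraMap_apply] at hxy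
    exact hinj (Polynomial.C_injective hxy)

theorem good_mv (B : Type u) [CommRing B] [IsDomain B] [IsPrincipalIdealRing B] (σ : Type*)
    [Finite σ] : Good B (MvPolynomial σ B) := by
  obtain ⟨m, ⟨e⟩⟩ := Finite.exists_equiv_fin σ
  obtain ⟨C, i1, i2, -, -, -, ⟨e'⟩, -, hG⟩ := good_all B m
  exact good_equiv B _ C ((MvPolynomial.renameEquiv B e).trans e') hG

end QS

namespace QS

section Core
variable {B A : Type*} [CommRing B] [CommRing A] [Algebra B A]

theorem goodAny (hG : Good B A) (ι : Type) [Fintype ι] [DecidableEq ι] (i1 i2 : ι)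
    (h12 : i1 ≠ i2) (h : ι → B) (hη : ∀ b, h b ∣ h i2) (hη1 : h i1 = h i2) (hη2 : h i2 ≠ 0)
    (u : ι → A) (hu : Uni u)
    (hd : ∀ b, algebraMap B A (h i2) ∣ algebraMap B A (h b) * u b) :
    Trans (fun b => algebraMap B A (h b)) u (Pi.single i2 1) := by
  by_cases h0 : ∃ i0, i0 ≠ i1 ∧ i0 ≠ i2
  · obtain ⟨i0, h01, h02⟩ := h0
    exact hG ι i0 i1 i2 h01 h02 h12 h hη hη1 hη2 u hu hd
  · push Not at h0
    refine trans_pair _ u i1 i2 h12 (by rw [hη1]) hd ?_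
    obtain ⟨y, hy⟩ := hu
    have huniv : (Finset.univ : Finset ι) = {i1, i2} := by
      ext b
      simp only [Finset.mem_univ, Finset.mem_insert, Finset.mem_singleton, true_iff]
      by_cases hb : b = i1
      · exact Or.inl hb
      · exact Or.inr (h0 b hb)
    rw [dotProduct, huniv, Finset.sum_pair h12] at hy
    exact ⟨y i1, y i2, by rw [← hy]; ring⟩

theorem complete [Nontrivial B] (hG : Good B A) (ι : Type) [Fintype ι] [DecidableEq ι] (i2 : ι)
    (w : ι → A) (hw : Uni w) : ∃ D : Matrix ι ι A, IsUnit D.det ∧ ∀ b, D i2 b = w b := by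
  by_cases h1 : ∃ i1, i1 ≠ i2
  · obtain ⟨i1, h12⟩ := h1
    have t := goodAny hG ι i1 i2 h12 (fun _ => 1) (by simp) rfl one_ne_zero w hw (by simp)
    obtain ⟨P, P', Q, Q', h1, h2, h3, h4, h5, h6⟩ := t.symm
    refine ⟨P, Matrix.isUnit_det_of_right_inverse h1, fun b => ?_⟩
    have := congrFun h6 b
    simpa using this
  · push Not at h1
    have : Unique ι := ⟨⟨i2⟩, h1⟩
    obtain ⟨y, hy⟩ := hw
    refine ⟨Matrix.of fun _ b => w b, ?_, fun b => rfl⟩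
    rw [Matrix.det_unique, Matrix.of_apply]
    rw [dotProduct, Fintype.sum_unique] at hy
    exact IsUnit.of_mul_eq_one _ hy

theorem minor_mem {k l : ℕ} (V : Matrix (Fin l) (Fin l) A) (w : Fin l → A) (z : Fin l)
    (hwV : w ᵥ* V = Pi.single z 1) (hw : Uni w) (r : Fin k ↪ Fin l) (c : Fin k → Fin l)
    (hc : ∀ j, c j ≠ z) (I : Ideal A) (hI : ∀ a, a ∉ Set.range r → w a ∈ I) :
    (V.submatrix r c).det ∈ I := by
  have h1 : ∀ j, ∑ i, w (r i) * V (r i) (c j) ∈ I := by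
    intro j
    have h2 := congrFun hwV (c j)
    rw [Pi.single_eq_of_ne (hc j), vecMul, dotProduct,
      ← Finset.sum_add_sum_compl (Finset.univ.map r), Finset.sum_map] at h2
    rw [eq_neg_of_add_eq_zero_left h2]
    refine I.neg_mem (I.sum_mem fun a ha => I.mul_mem_right _ (hI a ?_))
    simpa using ha
  have h3 : ∀ i, w (r i) * (V.submatrix r c).det ∈ I := by
    intro i
    have : w (r i) * (V.submatrix r c).det =
        (((fun i => w (r i)) ᵥ* V.submatrix r c) ᵥ* (V.submatrix r c).adjugate) i := by
      rw [vecMul_vecMul, Matrix.mul_adjugate, vecMul_smul, vecMul_one]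
      simp [mul_comm]
    rw [this, vecMul, dotProduct]
    refine I.sum_mem fun j _ => I.mul_mem_right _ ?_
    exact h1 j
  have h4 : ∀ b, w b * (V.submatrix r c).det ∈ I := by
    intro b
    by_cases hb : b ∈ Set.range r
    · obtain ⟨i, rfl⟩ := hb
      exact h3 i
    · exact I.mul_mem_right _ (hI b hb)
  obtain ⟨y, hy⟩ := hw
  have : (V.submatrix r c).det = ∑ b, y b * (w b * (V.submatrix r c).det) := by
    simp_rw [← mul_assoc, ← Finset.sum_mul]
    have : ∑ b, y b * w b = 1 := by rw [← hy, dotProduct]; simp [mul_comm]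
    rw [this, one_mul]
  rw [this]
  exact I.sum_mem fun b _ => I.mul_mem_left _ (h4 b)

theorem det_sub {k l : ℕ} (V : Matrix (Fin l) (Fin l) A) (d1 d2 : Fin l → A)
    (r c : Fin k → Fin l) :
    ((diagonal d1 * V * diagonal d2).submatrix r c).det =
      (∏ i, d1 (r i)) * (V.submatrix r c).det * ∏ j, d2 (c j) := by
  have : (diagonal d1 * V * diagonal d2).submatrix r c =
      diagonal (fun i => d1 (r i)) * V.submatrix r c * diagonal (fun j => d2 (c j)) := by
    ext i j
    simp [mul_diagonal, diagonal_mul]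
  rw [this, det_mul, det_mul, det_diagonal, det_diagonal]

/-- The algebraic construction in the nondegenerate case. -/
theorem coreN_alg [IsDomain A] {ι : Type} [Fintype ι] [DecidableEq ι] (η : ι → A) (i2 : ι)
    (hη : η i2 ≠ 0) (u w : ι → A) (huw : ∀ b, η b * u b = η i2 * w b) (δ : A) (hδ : δ ≠ 0)
    (v s : A) (hvs : v * w i2 + δ * s = 1) (ht : Trans η (Pi.single i2 1) u)  :
    ∃ Ph Pp : Matrix ι ι A, IsUnit Ph.det ∧ IsUnit Pp.det ∧
      Ph * diagonal (fun b => if b = i2 then η b * δ else η b) =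
        diagonal (fun b => if b = i2 then η b * δ else η b) * Pp ∧ ∀ b, Pp i2 b = w b := by
  obtain ⟨P, P', Q, Q', h1, h2, h3, h4, h5, h6⟩ := ht
  have hPu : ∀ b, P i2 b = u b := by
    intro b
    have := congrFun h6 b
    simpa using this
  have hPP : ∀ a b, P a b * η b = η a * P' a b := by
    intro a b
    have := congrFun (congrFun h5 a) b
    simpa [mul_diagonal, diagonal_mul] using this
  have hPw : ∀ b, P' i2 b = w b := by
    intro b
    apply mul_left_cancel₀ hη
    rw [← hPP, hPu, ← huw, mul_comm]
  have huw2 : u i2 = w i2 := mul_left_cancel₀ hη (huw i2)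
  have aux : ∀ x : ι → A, x i2 = 0 → IsUnit (1 - vecMulVec x (Pi.single i2 1)).det := by
    intro x hx
    have h0 : vecMulVec x (Pi.single i2 1) * vecMulVec x (Pi.single i2 1) = 0 := by
      rw [vecMulVec_mul_vecMulVec]
      simp [hx]
    apply Matrix.isUnit_det_of_right_inverse (B := 1 + vecMulVec x (Pi.single i2 1))
    noncomm_ring
    simp [h0]
  let Pp : Matrix ι ι A := Matrix.of fun a b => if a = i2 then w b else P' a b - P' a i2 * v * w b
  let Pt : Matrix ι ι A := Matrix.of fun a b => if a = i2 then u b else P a b - P a i2 * v * u b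
  let Ph : Matrix ι ι A := Matrix.of fun a b => if a = i2 then (if b = i2 then u b else δ * u b) else
    if b = i2 then P a i2 * s else P a b - P a i2 * v * u b
  have hPp : Pp = (1 - vecMulVec (fun a => if a = i2 then 0 else P' a i2 * v)
      (Pi.single i2 1)) * P' := by
    ext a b
    rw [sub_mul, one_mul, Matrix.sub_apply, vecMulVec_mul, vecMulVec_apply, single_one_vecMul,
      Matrix.row_apply, hPw]
    by_cases ha : a = i2
    · simp [Pp, ha, hPw]
    · simp [Pp, ha]
  have hPt : Pt = (1 - vecMulVec (fun a => if a = i2 then 0 else P a i2 * v)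
      (Pi.single i2 1)) * P := by
    ext a b
    rw [sub_mul, one_mul, Matrix.sub_apply, vecMulVec_mul, vecMulVec_apply, single_one_vecMul,
      Matrix.row_apply, hPu]
    by_cases ha : a = i2
    · simp [Pt, ha, hPu]
    · simp [Pt, ha]
  have uPp : IsUnit Pp.det := by
    rw [hPp, det_mul]
    exact (aux _ (by simp)).mul (Matrix.isUnit_det_of_right_inverse h3)
  have uPt : IsUnit Pt.det := by
    rw [hPt, det_mul]
    exact (aux _ (by simp)).mul (Matrix.isUnit_det_of_right_inverse h1)
  have hΔ : diagonal (fun b => if b = i2 then δ else 1) * Pt =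
      Ph * diagonal (fun b => if b = i2 then δ else 1) := by
    ext a b
    simp only [mul_diagonal, diagonal_mul, Pt, Ph, Matrix.of_apply]
    by_cases ha : a = i2
    · by_cases hb : b = i2
      · simp [ha, hb, mul_comm]
      · simp [ha, hb]
    · by_cases hb : b = i2
      · simp only [ha, hb, if_true, if_false]
        rw [huw2]
        linear_combination - P a i2 * hvs
      · simp [ha, hb]
  have hdet : Pt.det = Ph.det := by
    have := congrArg Matrix.det hΔ
    rw [det_mul, det_mul, det_diagonal, mul_comm] at this
    refine mul_right_cancel₀ ?_ this
    rw [Finset.prod_ite_eq' Finset.univ i2 (fun _ => δ)]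
    simpa using hδ
  refine ⟨Ph, Pp, hdet ▸ uPt, uPp, ?_, fun b => by simp [Pp]⟩
  ext a b
  simp only [mul_diagonal, diagonal_mul, Pp, Ph, Matrix.of_apply]
  have e1 := hPP a b
  have e2 := hPP a i2
  have e3 := huw b
  by_cases ha : a = i2
  · by_cases hb : b = i2
    · simp only [ha, hb, if_true]
      rw [huw2]; ring
    · simp only [ha, hb, if_true, if_false]
      linear_combination δ * huw b
  · by_cases hb : b = i2
    · simp only [ha, hb, if_true, if_false]
      linear_combination (s * δ) * e2 + η a * P' a i2 * hvs
    · simp only [ha, hb, if_false]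
      linear_combination e1 - v * P a i2 * e3 - v * w b * e2

end Core
end QS

namespace QS

section Core2
variable {A : Type*} [CommRing A] [IsDomain A]

theorem prod_filter_lt (n : ℕ) (h : Fin (n + 1) → A) :
    ∏ i ∈ Finset.univ.filter (fun i : Fin (n + 1) => (i : ℕ) < n), h i
      = ∏ i : Fin n, h i.castSucc := by
  rw [Finset.prod_filter, Fin.prod_univ_castSucc]
  simp

theorem coreN_ideal (n : ℕ) (h g : Fin (n + 1) → A)
    (hg : ∀ b, h (Fin.last n) = h b * g b) (hl : h (Fin.last n) ≠ 0) (α : A) (hα : α ≠ 0)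
    (V : Matrix (Fin (n + 1)) (Fin (n + 1)) A) (w : Fin (n + 1) → A)
    (hwV : w ᵥ* V = Pi.single (Fin.last n) 1) (hw : Uni w)
    (hJ : reducedIdeal (diagonal (fun i => if i = Fin.last n then h i * α else h i) * V *
      diagonal (fun i => if i = Fin.last n then 0 else 1)) n
      (∏ i ∈ Finset.univ.filter (fun i : Fin (n + 1) => (i : ℕ) < n), h i) = ⊤)
    (I : Ideal A) (h1 : w (Fin.last n) ∈ I)
    (h2 : ∀ a, a ≠ Fin.last n → g a * α * w a ∈ I) : I = ⊤ := by
  have hne : ∀ b, h b ≠ 0 := fun b hb => hl (by rw [hg b, hb, zero_mul])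
  rw [eq_top_iff, ← hJ, reducedIdeal, Ideal.span_le]
  rintro v ⟨r, c, hv⟩
  rw [det_sub] at hv
  have hH : ∏ i ∈ Finset.univ.filter (fun i : Fin (n + 1) => (i : ℕ) < n), h i ≠ 0 :=
    Finset.prod_ne_zero_iff.2 fun i _ => hne i
  by_cases hc : ∃ j, c j = Fin.last n
  · obtain ⟨j, hj⟩ := hc
    have h0 : (∏ j, if c j = Fin.last n then (0 : A) else 1) = 0 :=
      Finset.prod_eq_zero (Finset.mem_univ j) (if_pos hj)
    rw [h0, mul_zero] at hv
    have := (mul_eq_zero.1 hv).resolve_left hH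
    rw [this]
    exact I.zero_mem
  push Not at hc
  rw [Finset.prod_eq_one (fun j _ => if_neg (hc j)), mul_one] at hv
  have hcard : ((Finset.univ.map r)ᶜ).card = 1 := by
    rw [Finset.card_compl, Finset.card_map]
    simp
  obtain ⟨a, ha⟩ := Finset.card_eq_one.1 hcard
  have hran : ∀ a', a' ∉ Set.range r → a' = a := by
    intro a' ha'
    rw [← Finset.mem_singleton, ← ha]
    simpa using ha'
  have hprod : (∏ i, (if r i = Fin.last n then h (r i) * α else h (r i))) *
      (if a = Fin.last n then h a * α else h a) =
      (∏ i ∈ Finset.univ.filter (fun i : Fin (n + 1) => (i : ℕ) < n), h i) *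
        (h (Fin.last n) * α) := by
    have e := Finset.prod_mul_prod_compl (Finset.univ.map r)
      (fun i => if i = Fin.last n then h i * α else h i)
    rw [ha, Finset.prod_map, Finset.prod_singleton] at e
    rw [e, prod_filter_lt, Fin.prod_univ_castSucc]
    congr 1
    · refine Finset.prod_congr rfl fun i _ => if_neg (Fin.castSucc_ne_last i)
    · simp
  by_cases hal : a = Fin.last n
  · rw [if_pos hal, hal] at hprod
    have hv2 := mul_right_cancel₀ (mul_ne_zero hl hα) hprod
    rw [hv2] at hv
    have hv3 := mul_left_cancel₀ hH hv
    rw [hv3]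
    refine minor_mem V w _ hwV hw r c hc I fun a' ha' => ?_
    rw [hran a' ha', hal]
    exact h1
  · rw [if_neg hal, hg a] at hprod
    have hv2 : v = g a * α * (V.submatrix r c).det := by
      apply mul_left_cancel₀ (mul_ne_zero hH (hne a))
      linear_combination (h a) * hv + (V.submatrix r c).det * hprod
    rw [hv2]
    refine minor_mem V w _ hwV hw r c hc
      (Submodule.comap (LinearMap.lsmul A A (g a * α)) I : Ideal A) fun a' ha' => ?_
    rw [hran a' ha']
    exact h2 a hal

theorem coreZ_ideal (n s : ℕ) (hsn : s ≤ n) (h : Fin (n + 1) → A)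
    (hs : ∀ b, h b ≠ 0 ↔ (b : ℕ) < s) (α : A)
    (V : Matrix (Fin (n + 1)) (Fin (n + 1)) A) (w : Fin (n + 1) → A)
    (hwV : w ᵥ* V = Pi.single (Fin.last n) 1) (hw : Uni w)
    (hJ : reducedIdeal (diagonal (fun i => if i = Fin.last n then h i * α else h i) * V *
      diagonal (fun i => if i = Fin.last n then 0 else 1)) s
      (∏ i ∈ Finset.univ.filter (fun i : Fin (n + 1) => (i : ℕ) < s), h i) = ⊤)
    (I : Ideal A) (h1 : ∀ a : Fin (n + 1), ¬ (a : ℕ) < s → w a ∈ I) : I = ⊤ := by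
  rw [eq_top_iff, ← hJ, reducedIdeal, Ideal.span_le]
  rintro v ⟨r, c, hv⟩
  rw [det_sub] at hv
  have hH : ∏ i ∈ Finset.univ.filter (fun i : Fin (n + 1) => (i : ℕ) < s), h i ≠ 0 :=
    Finset.prod_ne_zero_iff.2 fun i hi => (hs i).2 (by simpa using hi)
  by_cases hc : ∃ j, c j = Fin.last n
  · obtain ⟨j, hj⟩ := hc
    have h0 : (∏ j, if c j = Fin.last n then (0 : A) else 1) = 0 :=
      Finset.prod_eq_zero (Finset.mem_univ j) (if_pos hj)
    rw [h0, mul_zero] at hv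
    have := (mul_eq_zero.1 hv).resolve_left hH
    rw [this]
    exact I.zero_mem
  push Not at hc
  rw [Finset.prod_eq_one (fun j _ => if_neg (hc j)), mul_one] at hv
  by_cases hr : ∃ i, ¬ ((r i : Fin (n + 1)) : ℕ) < s
  · obtain ⟨i, hi⟩ := hr
    have h0 : h (r i) = 0 := by
      by_contra h0
      exact hi ((hs _).1 h0)
    rw [Finset.prod_eq_zero (Finset.mem_univ i) (by simp [h0]), zero_mul] at hv
    have := (mul_eq_zero.1 hv).resolve_left hH
    rw [this]
    exact I.zero_mem
  push Not at hr
  have hmap : Finset.univ.map r = Finset.univ.filter (fun i : Fin (n + 1) => (i : ℕ) < s) := by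
    apply Finset.eq_of_subset_of_card_le
    · intro x hx
      obtain ⟨i, -, rfl⟩ := Finset.mem_map.1 hx
      simpa using hr i
    · rw [Finset.card_map, Finset.card_univ, Fintype.card_fin, Fin.card_filter_val_lt]
      exact min_le_right _ _
  have hprod : (∏ i, (if r i = Fin.last n then h (r i) * α else h (r i))) =
      ∏ i ∈ Finset.univ.filter (fun i : Fin (n + 1) => (i : ℕ) < s), h i := by
    rw [← hmap, Finset.prod_map]
    refine Finset.prod_congr rfl fun i _ => if_neg ?_
    intro e
    have := hr i
    rw [e, Fin.val_last] at this
    omega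
  rw [hprod] at hv
  rw [mul_left_cancel₀ hH hv]
  refine minor_mem V w _ hwV hw r c hc I fun a ha => h1 a fun has => ha ?_
  have : a ∈ Finset.univ.map r := by rw [hmap]; simpa using has
  obtain ⟨i, -, hi⟩ := Finset.mem_map.1 this
  exact ⟨i, hi⟩

end Core2
end QS

namespace QS

section Core3
variable {B A : Type*} [CommRing B] [IsDomain B] [CommRing A] [IsDomain A] [Algebra B A]

theorem uni_of_span {ι : Type*} [Fintype ι] [DecidableEq ι] (u : ι → A)
    (h : Ideal.span (Set.range u) = ⊤) : Uni u := by
  have h1 : (1 : A) ∈ Ideal.span (Set.range u) := h ▸ Submodule.mem_top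
  obtain ⟨c, hc⟩ := (Ideal.mem_span_range_iff_exists_fun).1 h1
  exact ⟨c, by rw [← hc, dotProduct]; exact Finset.sum_congr rfl fun i _ => mul_comm _ _⟩

theorem coreZ (hG : Good B A) (n s : ℕ) (hsn : s ≤ n) (h : Fin (n + 1) → A)
    (hs : ∀ b, h b ≠ 0 ↔ (b : ℕ) < s) (α : A)
    (w : Fin (n + 1) → A) 
    (hI : ∀ I : Ideal A, (∀ a : Fin (n + 1), ¬ (a : ℕ) < s → w a ∈ I) → I = ⊤) :
    ∃ Ph Pp : Matrix (Fin (n + 1)) (Fin (n + 1)) A, IsUnit Ph.det ∧ IsUnit Pp.det ∧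
      Ph * diagonal (fun i => if i = Fin.last n then h i * α else h i) =
        diagonal (fun i => if i = Fin.last n then h i * α else h i) * Pp ∧
      ∀ b, Pp (Fin.last n) b = w b := by
  have hlast : ¬ ((Fin.last n : Fin (n + 1)) : ℕ) < s := by simpa using hsn
  have hu : Uni (fun b : {b : Fin (n + 1) // ¬ (b : ℕ) < s} => w b) := by
    apply uni_of_span
    apply hI
    intro a ha
    exact Ideal.subset_span ⟨⟨a, ha⟩, rfl⟩
  obtain ⟨D, hD, hDw⟩ := complete hG _ ⟨Fin.last n, hlast⟩ _ hu
  let Pp : Matrix (Fin (n + 1)) (Fin (n + 1)) A := Matrix.of fun a b =>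
    if ha : (a : ℕ) < s then (1 : Matrix (Fin (n + 1)) (Fin (n + 1)) A) a b else
    if hb : (b : ℕ) < s then (if a = Fin.last n then w b else 0) else D ⟨a, ha⟩ ⟨b, hb⟩
  refine ⟨1, Pp, by simp, ?_, ?_, ?_⟩
  · rw [Matrix.twoBlockTriangular_det' Pp (fun a => (a : ℕ) < s)]
    · have e1 : Pp.toSquareBlockProp (fun a => (a : ℕ) < s) = 1 := by
        ext a b
        simp only [toSquareBlockProp_def, Matrix.of_apply, Pp, dif_pos a.2, Matrix.one_apply,
          Subtype.ext_iff]
      have e2 : Pp.toSquareBlockProp (fun a => ¬ (a : ℕ) < s) = D := by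
        ext a b
        simp only [toSquareBlockProp_def, Matrix.of_apply, Pp, dif_neg a.2, dif_neg b.2]
      rw [e1, e2, det_one, one_mul]
      exact hD
    · intro i hi j hj
      simp only [Pp, Matrix.of_apply, dif_pos hi]
      rw [Matrix.one_apply_ne]
      rintro rfl
      exact hj hi
  · ext a b
    rw [one_mul, diagonal_mul]
    by_cases ha : (a : ℕ) < s
    · simp only [Pp, Matrix.of_apply, dif_pos ha]
      by_cases hab : a = b
      · subst hab; simp
      · simp [hab]
    · have h0 : h a = 0 := by
        by_contra h0
        exact ha ((hs _).1 h0)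
      have : (if a = Fin.last n then h a * α else h a) = 0 := by simp [h0]
      rw [this, zero_mul]
      by_cases hab : a = b
      · subst hab; simpa using this
      · simp [hab]
  · intro b
    simp only [Pp, Matrix.of_apply, dif_neg hlast]
    by_cases hb : (b : ℕ) < s
    · simp [hb]
    · rw [dif_neg hb]
      exact hDw ⟨b, hb⟩

theorem coreN (hinj : Function.Injective (algebraMap B A)) (hG : Good B A) (n : ℕ) (hn : 1 ≤ n)
    (h : Fin (n + 1) → B) (hch : ∀ i i', i ≤ i' → h i ∣ h i') (hl : h (Fin.last n) ≠ 0)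
    (α : A) (hα : α ≠ 0)
    (V : Matrix (Fin (n + 1)) (Fin (n + 1)) A) (w : Fin (n + 1) → A)
    (hwV : w ᵥ* V = Pi.single (Fin.last n) 1) (hw : Uni w)
    (hJ : reducedIdeal (diagonal (fun i => if i = Fin.last n then algebraMap B A (h i) * α
        else algebraMap B A (h i)) * V *
      diagonal (fun i => if i = Fin.last n then 0 else 1)) n
      (∏ i ∈ Finset.univ.filter (fun i : Fin (n + 1) => (i : ℕ) < n),
        algebraMap B A (h i)) = ⊤) :
    ∃ Ph Pp : Matrix (Fin (n + 1)) (Fin (n + 1)) A, IsUnit Ph.det ∧ IsUnit Pp.det ∧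
      Ph * diagonal (fun i => if i = Fin.last n then algebraMap B A (h i) * α
        else algebraMap B A (h i)) =
        diagonal (fun i => if i = Fin.last n then algebraMap B A (h i) * α
        else algebraMap B A (h i)) * Pp ∧
      ∀ b, Pp (Fin.last n) b = w b := by
  let i1 : Fin (n + 1) := ⟨n - 1, by omega⟩
  have hi1 : i1 ≠ Fin.last n := by
    intro e
    have := congrArg Fin.val e
    simp [i1] at this
    omega
  obtain ⟨q, hq⟩ := hch i1 (Fin.last n) (Fin.le_last _)
  let h' : Fin (n + 1) → B := fun b => if b = Fin.last n then h i1 else h b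
  have hh1 : h i1 ≠ 0 := fun e => hl (by rw [hq, e, zero_mul])
  have hq0 : q ≠ 0 := fun e => hl (by rw [hq, e, mul_zero])
  have hdv : ∀ b, h' b ∣ h i1 := by
    intro b
    by_cases hb : b = Fin.last n
    · simp [h', hb]
    · simp only [h', if_neg hb]
      apply hch
      have : (b : ℕ) ≠ n := fun e => hb (Fin.ext e)
      have := b.2
      rw [Fin.le_def]
      simp only [i1]
      omega
  choose p hp using hdv
  have hplast : p (Fin.last n) = 1 := by
    have := hp (Fin.last n)
    simp only [h', if_true] at this
    exact mul_left_cancel₀ hh1 (by rw [← this, mul_one])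
  have hpne : ∀ b, b ≠ Fin.last n → h i1 = h b * p b := by
    intro b hb
    have := hp b
    simpa only [h', if_neg hb] using this
  let u : Fin (n + 1) → A := fun b => algebraMap B A (p b) * w b
  have hulast : u (Fin.last n) = w (Fin.last n) := by simp [u, hplast]
  have hJ' := coreN_ideal n (fun i => algebraMap B A (h i))
    (fun b => if b = Fin.last n then 1 else algebraMap B A (p b) * algebraMap B A q) (by
      intro b
      by_cases hb : b = Fin.last n
      · simp [hb]
      · simp only [if_neg hb, ← map_mul]
        rw [hq, hpne b hb, mul_assoc]) (by
      rw [Ne, map_eq_zero_iff _ hinj]; exact hl) α hα V w hwV hw hJ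
  have hδ : algebraMap B A q * α ≠ 0 :=
    mul_ne_zero (by rw [Ne, map_eq_zero_iff _ hinj]; exact hq0) hα
  have hI1 := hJ' (Ideal.span {w (Fin.last n), algebraMap B A q * α})
    (Ideal.subset_span (by simp)) (by
      intro a ha
      rw [if_neg ha]
      have : algebraMap B A (p a) * algebraMap B A q * α * w a =
        (algebraMap B A (p a) * w a) * (algebraMap B A q * α) := by ring
      rw [this]
      exact Ideal.mul_mem_left _ _ (Ideal.subset_span (by simp)))
  have hI2 := hJ' (Ideal.span (Set.range u))
    (Ideal.subset_span ⟨Fin.last n, hulast⟩) (by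
      intro a ha
      rw [if_neg ha]
      have : algebraMap B A (p a) * algebraMap B A q * α * w a =
        (algebraMap B A q * α) * u a := by simp only [u]; ring
      rw [this]
      exact Ideal.mul_mem_left _ _ (Ideal.subset_span ⟨a, rfl⟩))
  have hvs : (1 : A) ∈ Ideal.span {w (Fin.last n), algebraMap B A q * α} :=
    hI1 ▸ Submodule.mem_top
  obtain ⟨v, s, hvs⟩ := Ideal.mem_span_pair.1 hvs
  have hlast' : h' (Fin.last n) = h i1 := by simp [h']
  have huw : ∀ b, algebraMap B A (h' b) * u b = algebraMap B A (h' (Fin.last n)) * w b := by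
    intro b
    simp only [u]
    rw [hlast', hp b, map_mul, mul_assoc]
  have ht := goodAny hG (Fin (n + 1)) i1 (Fin.last n) hi1 h'
    (by rw [hlast']; exact fun b => ⟨p b, hp b⟩) (by simp [h', hi1]) (by rw [hlast']; exact hh1)
    u (uni_of_span u hI2) (fun b => ⟨w b, huw b⟩)
  have := coreN_alg (fun b => algebraMap B A (h' b)) (Fin.last n)
    (by rw [Ne, map_eq_zero_iff _ hinj, hlast']; exact hh1) u w huw (algebraMap B A q * α) hδ
    v s (by rw [← hvs]; ring) ht.symm
  have e : (fun b => if b = Fin.last n then algebraMap B A (h' b) * (algebraMap B A q * α)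
      else algebraMap B A (h' b)) = (fun i => if i = Fin.last n then algebraMap B A (h i) * α
        else algebraMap B A (h i)) := by
    funext b
    by_cases hb : b = Fin.last n
    · simp only [hb, if_true, hlast']
      rw [hq, map_mul, mul_assoc]
    · simp [hb, h']
  rw [e] at this
  exact this

theorem core (hinj : Function.Injective (algebraMap B A)) (hG : Good B A) (n : ℕ)
    (h : Fin (n + 1) → B) (hch : ∀ i i', i ≤ i' → h i ∣ h i')
    (α : A) (hα : α ≠ 0)
    (V V' : Matrix (Fin (n + 1)) (Fin (n + 1)) A) (hVV : V' * V = 1)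
    (hJ : ∀ k, 1 ≤ k → k ≤ n →
      reducedIdeal (diagonal (fun i => if i = Fin.last n then algebraMap B A (h i) * α
        else algebraMap B A (h i)) * V *
      diagonal (fun i => if i = Fin.last n then 0 else 1)) k
      (∏ i ∈ Finset.univ.filter (fun i : Fin (n + 1) => (i : ℕ) < k),
        algebraMap B A (h i)) = ⊤) :
    ∃ Ph Pp : Matrix (Fin (n + 1)) (Fin (n + 1)) A, IsUnit Ph.det ∧ IsUnit Pp.det ∧
      Ph * diagonal (fun i => if i = Fin.last n then algebraMap B A (h i) * α
        else algebraMap B A (h i)) =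
        diagonal (fun i => if i = Fin.last n then algebraMap B A (h i) * α
        else algebraMap B A (h i)) * Pp ∧
      ∀ b, Pp (Fin.last n) b = V' (Fin.last n) b := by
  have hV'u : IsUnit V'.det := Matrix.isUnit_det_of_right_inverse hVV
  have hwV : V' (Fin.last n) ᵥ* V = Pi.single (Fin.last n) 1 := by
    have := congrFun hVV (Fin.last n)
    rw [Matrix.mul_apply_eq_vecMul] at this
    rw [this]
    ext b
    rw [Matrix.one_apply, Pi.single_apply]
    simp [eq_comm]
  have hw : Uni (V' (Fin.last n)) := by
    refine ⟨fun b => V b (Fin.last n), ?_⟩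
    have := congrFun hwV (Fin.last n)
    rwa [Pi.single_eq_same] at this
  by_cases hl : h (Fin.last n) = 0
  · have hex : ∃ s : ℕ, ∀ b : Fin (n + 1), s ≤ (b : ℕ) → h b = 0 := by
      refine ⟨n, fun b hb => ?_⟩
      have : b = Fin.last n := Fin.ext (le_antisymm (Nat.lt_succ_iff.1 b.2) hb)
      rw [this, hl]
    classical
    obtain ⟨s, hsdef⟩ : ∃ s, s = Nat.find hex := ⟨_, rfl⟩
    have hsn : s ≤ n := by
      rw [hsdef]
      apply Nat.find_min'
      intro b hb
      have : b = Fin.last n := Fin.ext (le_antisymm (Nat.lt_succ_iff.1 b.2) hb)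
      rw [this, hl]
    have hs : ∀ b, h b ≠ 0 ↔ (b : ℕ) < s := by
      intro b
      constructor
      · intro hb
        by_contra hlt
        exact hb (Nat.find_spec hex b (by rw [← hsdef]; omega))
      · intro hb h0
        have : s ≤ b := by
          rw [hsdef]
          apply Nat.find_min'
          intro b' hb'
          have := hch b b' hb'
          rw [h0] at this
          exact zero_dvd_iff.1 this
        omega
    have hs' : ∀ b, algebraMap B A (h b) ≠ 0 ↔ (b : ℕ) < s := by
      intro b
      rw [← hs b, Ne, map_eq_zero_iff _ hinj]
    by_cases hs0 : s = 0
    · have : (fun i => if i = Fin.last n then algebraMap B A (h i) * α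
        else algebraMap B A (h i)) = 0 := by
        funext b
        have : h b = 0 := by
          by_contra h0
          have := (hs b).1 h0
          omega
        simp [this]
      refine ⟨1, V', by simp, hV'u, ?_, fun b => rfl⟩
      rw [this]
      ext a b
      simp [mul_diagonal, diagonal_mul, diagonal_apply]
    · exact coreZ hG n s hsn _ hs' α _ fun I hI =>
        coreZ_ideal n s hsn _ hs' α V _ hwV hw (hJ s (by omega) hsn) I hI
  · by_cases hn : n = 0
    · subst hn
      refine ⟨V', V', hV'u, hV'u, ?_, fun b => rfl⟩
      ext a b
      rw [mul_diagonal, diagonal_mul, show a = b from Fin.ext (by omega), mul_comm]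
    · exact coreN hinj hG n (by omega) h hch hl α hα V _ hwV hw (hJ n (by omega) le_rfl)

end Core3

theorem finish {R : Type*} [CommRing R] [IsDomain R] (n : ℕ) (D1 : Fin (n + 1) → R) (β : R)
    (hβ : β ≠ 0) (V V' Ph Pp : Matrix (Fin (n + 1)) (Fin (n + 1)) R) (hVV : V' * V = 1)
    (hPh : IsUnit Ph.det) (hPp : IsUnit Pp.det) (hP : Ph * diagonal D1 = diagonal D1 * Pp)
    (hlast : ∀ b, Pp (Fin.last n) b = V' (Fin.last n) b) :
    MatEquiv (diagonal D1 * V * diagonal (fun i => if i = Fin.last n then β else 1))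
      (diagonal D1 * diagonal (fun i => if i = Fin.last n then β else 1)) := by
  obtain ⟨N, hN⟩ : ∃ N, N = Pp * V := ⟨_, rfl⟩
  have hVu : IsUnit V.det := Matrix.isUnit_det_of_left_inverse hVV
  have hNl : ∀ b, N (Fin.last n) b = if b = Fin.last n then 1 else 0 := by
    intro b
    have e := congrFun (congrFun hVV (Fin.last n)) b
    rw [Matrix.one_apply, Matrix.mul_apply] at e
    rw [hN, Matrix.mul_apply]
    simp only [hlast]
    rw [e]
    simp [eq_comm]
  let N' : Matrix (Fin (n + 1)) (Fin (n + 1)) R := Matrix.of fun a b =>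
    if a = Fin.last n then N a b else if b = Fin.last n then N a b * β else N a b
  have hND : diagonal (fun i => if i = Fin.last n then β else 1) * N' =
      N * diagonal (fun i => if i = Fin.last n then β else 1) := by
    ext a b
    simp only [mul_diagonal, diagonal_mul, N', Matrix.of_apply]
    by_cases ha : a = Fin.last n
    · by_cases hb : b = Fin.last n
      · simp [ha, hb, mul_comm]
      · simp [ha, hb, hNl]
    · by_cases hb : b = Fin.last n
      · simp [ha, hb]
      · simp [ha, hb]
  have hdet : N'.det = N.det := by
    have := congrArg Matrix.det hND
    rw [det_mul, det_mul, det_diagonal, mul_comm] at this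
    refine mul_right_cancel₀ ?_ this
    rw [Finset.prod_ite_eq' Finset.univ (Fin.last n) (fun _ => β)]
    simpa using hβ
  refine ⟨Ph⁻¹, N', ?_, ?_, ?_⟩
  · exact Matrix.isUnit_nonsing_inv_det _ hPh
  · rw [hdet, hN, det_mul]
    exact hPp.mul hVu
  · rw [mul_assoc Ph⁻¹, mul_assoc (diagonal D1) _ N', hND, hN]
    have : diagonal D1 * (Pp * V * diagonal (fun i => if i = Fin.last n then β else 1)) =
        Ph * (diagonal D1 * V * diagonal (fun i => if i = Fin.last n then β else 1)) := by
      simp only [← mul_assoc]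
      rw [hP]
    rw [this, ← mul_assoc, Matrix.nonsing_inv_mul _ hPh, one_mul]

theorem reducedIdeal_map {R S : Type*} [CommRing R] [CommRing S] (π : R →+* S) {l m : ℕ}
    (F : Matrix (Fin l) (Fin m) R) (k : ℕ) (d : R) (h : reducedIdeal F k d = ⊤) :
    reducedIdeal (F.map π) k (π d) = ⊤ := by
  rw [eq_top_iff, ← Ideal.map_top π, ← h, reducedIdeal, Ideal.map_span, Ideal.span_le]
  rintro _ ⟨v, ⟨r, c, hv⟩, rfl⟩
  apply Ideal.subset_span
  refine ⟨r, c, ?_⟩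
  rw [← map_mul, hv, RingHom.map_det]
  rfl

end QS

namespace QS

section Plumb
variable {K : Type*} [Field K] {σ : Type*} [DecidableEq σ]

/-- The inclusion of the coefficient ring. -/
noncomputable def eMap (i0 i8 : σ) :
    MvPolynomial {t : σ // t ≠ i0 ∧ t ≠ i8} (Polynomial K) →+* MvPolynomial σ K :=
  MvPolynomial.eval₂Hom
    ((Polynomial.aeval (MvPolynomial.X i8 : MvPolynomial σ K)) :
      Polynomial K →ₐ[K] MvPolynomial σ K).toRingHom
    (fun s => MvPolynomial.X s.1)

/-- The substitution of `c` for the distinguished variable. -/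
noncomputable def pMap (i0 i8 : σ) (c : MvPolynomial {t : σ // t ≠ i0 ∧ t ≠ i8} (Polynomial K)) :
    MvPolynomial σ K →ₐ[K] MvPolynomial {t : σ // t ≠ i0 ∧ t ≠ i8} (Polynomial K) :=
  MvPolynomial.aeval (fun t => if h0 : t = i0 then c else
    if h1 : t = i8 then MvPolynomial.C Polynomial.X else MvPolynomial.X ⟨t, h0, h1⟩)

theorem e_p (i0 i8 : σ) (c : MvPolynomial {t : σ // t ≠ i0 ∧ t ≠ i8} (Polynomial K))
    (x : MvPolynomial σ K) (hx : x ∈ MvPolynomial.supported K {t : σ | t ≠ i0}) :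
    eMap i0 i8 (pMap i0 i8 c x) = x := by
  rw [MvPolynomial.supported_eq_range_rename] at hx
  obtain ⟨y, rfl⟩ := hx
  have : (((eMap i0 i8).comp (pMap i0 i8 c).toRingHom).comp
      (rename (Subtype.val : {t : σ | t ≠ i0} → σ) :
        MvPolynomial {t : σ | t ≠ i0} K →ₐ[K] MvPolynomial σ K).toRingHom) =
      (rename (Subtype.val : {t : σ | t ≠ i0} → σ) :
        MvPolynomial {t : σ | t ≠ i0} K →ₐ[K] MvPolynomial σ K).toRingHom := by
    apply MvPolynomial.ringHom_ext
    · intro r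
      simp [eMap, pMap, MvPolynomial.algebraMap_eq, IsScalarTower.algebraMap_apply K (Polynomial K)
        (MvPolynomial {t : σ // t ≠ i0 ∧ t ≠ i8} (Polynomial K))]
    · intro t
      have ht : t.1 ≠ i0 := t.2
      by_cases h8 : t.1 = i8
      · have ht' : i8 ≠ i0 := h8 ▸ ht
        simp [eMap, pMap, ht', h8]
      · simp [eMap, pMap, ht, h8]
  exact congrArg (fun φ => φ y) this

theorem p_p (i0 i8 : σ) (c c' : MvPolynomial {t : σ // t ≠ i0 ∧ t ≠ i8} (Polynomial K))
    (x : MvPolynomial σ K) (hx : x ∈ MvPolynomial.supported K {t : σ | t ≠ i0}) :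
    pMap i0 i8 c x = pMap i0 i8 c' x := by
  rw [MvPolynomial.supported_eq_range_rename] at hx
  obtain ⟨y, rfl⟩ := hx
  have : (pMap i0 i8 c).comp (rename (Subtype.val : {t : σ | t ≠ i0} → σ)) =
      (pMap i0 i8 c').comp (rename (Subtype.val : {t : σ | t ≠ i0} → σ)) := by
    apply MvPolynomial.algHom_ext
    intro t
    have ht : t.1 ≠ i0 := t.2
    simp [pMap, ht]
  exact congrArg (fun φ => φ y) this

theorem p_h (i0 i8 : σ) (hne : i8 ≠ i0)
    (c : MvPolynomial {t : σ // t ≠ i0 ∧ t ≠ i8} (Polynomial K)) (p : Polynomial K) :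
    pMap i0 i8 c (Polynomial.aeval (MvPolynomial.X i8 : MvPolynomial σ K) p) =
      algebraMap (Polynomial K) _ p := by
  rw [← Polynomial.aeval_algHom_apply]
  have : pMap i0 i8 c (MvPolynomial.X i8) =
      algebraMap (Polynomial K) (MvPolynomial {t : σ // t ≠ i0 ∧ t ≠ i8} (Polynomial K))
        Polynomial.X := by
    simp [pMap, hne, MvPolynomial.algebraMap_eq]
  rw [this, Polynomial.aeval_algebraMap_apply, Polynomial.aeval_X_left_apply]

theorem e_h (i0 i8 : σ) (p : Polynomial K) :
    eMap i0 i8 (algebraMap (Polynomial K) _ p) =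
      Polynomial.aeval (MvPolynomial.X i8 : MvPolynomial σ K) p := by
  simp [eMap, MvPolynomial.algebraMap_eq]

theorem dvd_h (i8 : σ) (p q : Polynomial K)
    (h : Polynomial.aeval (MvPolynomial.X i8 : MvPolynomial σ K) p ∣
      Polynomial.aeval (MvPolynomial.X i8 : MvPolynomial σ K) q) : p ∣ q := by
  have := map_dvd (MvPolynomial.aeval (fun _ => Polynomial.X) :
    MvPolynomial σ K →ₐ[K] Polynomial K) h
  rw [← Polynomial.aeval_algHom_apply, ← Polynomial.aeval_algHom_apply] at this
  simpa using this

theorem mainThm [Finite σ] (i0 i8 : σ) (hne : i8 ≠ i0) (n : ℕ) (α g : MvPolynomial σ K)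
    (hα0 : α ≠ 0) (hα : α ∈ MvPolynomial.supported K {t : σ | t ≠ i0})
    (hg : g ∈ MvPolynomial.supported K {t : σ | t ≠ i0})
    (hβ0 : MvPolynomial.X i0 - g ≠ 0)
    (h : Fin (n + 1) → MvPolynomial σ K)
    (hsup : ∀ i, h i ∈ MvPolynomial.supported K {i8})
    (hchain : ∀ i i', i ≤ i' → h i ∣ h i')
    (V : Matrix (Fin (n + 1)) (Fin (n + 1)) (MvPolynomial σ K))
    (hVsup : ∀ i i', V i i' ∈ MvPolynomial.supported K {t : σ | t ≠ i0})
    (hVuni : IsUnit V.det)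
    (hJ : ∀ k : ℕ, 1 ≤ k → k ≤ n → reducedIdeal
      (diagonal (fun i => if i = Fin.last n then h i * α else h i) * V *
        diagonal (fun i => if i = Fin.last n then MvPolynomial.X i0 - g else 1)) k
      (∏ i ∈ Finset.univ.filter (fun i : Fin (n + 1) => (i : ℕ) < k), h i) = ⊤) :
    MatEquiv (diagonal (fun i => if i = Fin.last n then h i * α else h i) * V *
        diagonal (fun i => if i = Fin.last n then MvPolynomial.X i0 - g else 1))
      (diagonal (fun i => if i = Fin.last n then h i * α else h i) *
        diagonal (fun i => if i = Fin.last n then MvPolynomial.X i0 - g else 1)) := by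
  have hex : ∀ i, ∃ p : Polynomial K,
      Polynomial.aeval (MvPolynomial.X i8 : MvPolynomial σ K) p = h i := by
    intro i
    have := hsup i
    rw [MvPolynomial.supported_eq_adjoin_X, Set.image_singleton,
      Algebra.adjoin_singleton_eq_range_aeval] at this
    exact this
  choose p hp using hex
  obtain ⟨π, hπ⟩ : ∃ π, π = pMap (K := K) i0 i8 (pMap i0 i8 0 g) := ⟨_, rfl⟩
  have hβ : π (MvPolynomial.X i0 - g) = 0 := by
    rw [map_sub, hπ, p_p i0 i8 (pMap i0 i8 0 g) 0 g hg]
    simp [pMap]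
  have hep : ∀ x, x ∈ MvPolynomial.supported K {t : σ | t ≠ i0} → eMap i0 i8 (π x) = x := by
    intro x hx
    rw [hπ]
    exact e_p _ _ _ _ hx
  have hπh : ∀ i, π (h i) = algebraMap (Polynomial K) _ (p i) := by
    intro i
    rw [← hp i, hπ, p_h i0 i8 hne]
  have heh : ∀ i, eMap i0 i8 (algebraMap (Polynomial K) _ (p i)) = h i := by
    intro i
    rw [e_h, hp]
  have hα0' : π α ≠ 0 := by
    intro e
    apply hα0
    rw [← hep α hα, e, map_zero]
  have hVV : (V⁻¹).map π * V.map π = 1 := by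
    rw [← Matrix.map_mul, Matrix.nonsing_inv_mul _ hVuni]
    simp
  have hinj : Function.Injective (algebraMap (Polynomial K)
      (MvPolynomial {t : σ // t ≠ i0 ∧ t ≠ i8} (Polynomial K))) := by
    rw [MvPolynomial.algebraMap_eq]
    exact MvPolynomial.C_injective _ _
  obtain ⟨Ph, Pp, h1, h2, h3, h4⟩ := core hinj
    (good_mv (Polynomial K) {t : σ // t ≠ i0 ∧ t ≠ i8}) n p
    (fun i i' hi => dvd_h i8 _ _ (by rw [hp, hp]; exact hchain i i' hi)) (π α) hα0'
    (V.map π) ((V⁻¹).map π) hVV (by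
      intro k hk1 hk2
      have := reducedIdeal_map π.toRingHom _ _ _ (hJ k hk1 hk2)
      convert this using 2
      · apply Matrix.ext
        intro a b
        simp only [mul_diagonal, diagonal_mul, Matrix.map_apply, AlgHom.toRingHom_eq_coe,
          RingHom.coe_coe, map_mul]
        congr 1
        · congr 1
          split_ifs <;> simp [hπh]
        · by_cases hb : b = Fin.last n
          · rw [if_pos hb, if_pos hb, hβ]
          · rw [if_neg hb, if_neg hb, map_one]
      · simp [hπh])
  have hD : (eMap i0 i8 ∘ fun i => if i = Fin.last n then
      algebraMap (Polynomial K) (MvPolynomial {t : σ // t ≠ i0 ∧ t ≠ i8} (Polynomial K)) (p i)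
        * π α else algebraMap (Polynomial K) _ (p i)) =
      (fun i => if i = Fin.last n then h i * α else h i) := by
    funext i
    simp only [Function.comp]
    split_ifs
    · rw [map_mul, heh, hep α hα]
    · rw [heh]
  have hV : (V.map π).map (eMap i0 i8) = V := by
    ext1 a b
    exact hep _ (hVsup a b)
  refine finish n _ _ hβ0 V (((V⁻¹).map π).map (eMap i0 i8)) (Ph.map (eMap i0 i8))
    (Pp.map (eMap i0 i8)) ?_ ?_ ?_ ?_ ?_
  · have := congrArg (fun M => Matrix.map M (eMap i0 i8)) hVV
    simp only [Matrix.map_mul, hV] at this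
    rw [this]
    simp
  · have := h1.map (eMap (K := K) i0 i8)
    rwa [RingHom.map_det] at this
  · have := h2.map (eMap (K := K) i0 i8)
    rwa [RingHom.map_det] at this
  · have := congrArg (fun M => Matrix.map M (eMap i0 i8)) h3
    simp only [Matrix.map_mul] at this
    rw [Matrix.diagonal_map (map_zero _)] at this
    rw [← hD]
    exact this
  · intro b
    simp only [Matrix.map_apply, h4]

end Plumb
end QS

/-- Here `z_i` is `X ⟨i-1⟩`; `α = ∏_{i=j}^{n-1} (z_i - f_i)` is written as a
product over the indices `t : Fin n` with `j ≤ t+1 ≤ n-1`, and `β = z_{j-1} - f_{j-1}`. -/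
theorem statement5 {K : Type*} [Field K] (n : ℕ) (hn : 3 ≤ n)
    (j : ℕ) (hj2 : 2 ≤ j) (hjn : j ≤ n - 1) (l : ℕ) (hl : 0 < l)
    (f : ℕ → MvPolynomial (Fin n) K)
    (hfsup : ∀ i : ℕ, j - 1 ≤ i → i ≤ n - 1 →
      f i ∈ MvPolynomial.supported K {t : Fin n | i ≤ (t : ℕ)})
    (α β : MvPolynomial (Fin n) K)
    (hα : α = ∏ t ∈ Finset.univ.filter
        (fun t : Fin n => j ≤ (t : ℕ) + 1 ∧ (t : ℕ) + 1 ≤ n - 1),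
      (MvPolynomial.X t - f ((t : ℕ) + 1)))
    (hβ : β = MvPolynomial.X (⟨j - 2, by omega⟩ : Fin n) - f (j - 1))
    (h : Fin l → MvPolynomial (Fin n) K)
    (hsup : ∀ i : Fin l, h i ∈ MvPolynomial.supported K {(⟨n - 1, by omega⟩ : Fin n)})
    (hchain : ∀ i i' : Fin l, i ≤ i' → h i ∣ h i')
    (V : Matrix (Fin l) (Fin l) (MvPolynomial (Fin n) K))
    (hVsup : ∀ i i' : Fin l, V i i' ∈ MvPolynomial.supported K {t : Fin n | (t : ℕ) ≠ j - 2})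
    (hVuni : IsUnit V.det)
    (B : Matrix (Fin l) (Fin l) (MvPolynomial (Fin n) K))
    (hB : B = Matrix.diagonal (fun i : Fin l => if (i : ℕ) = l - 1 then h i * α else h i) * V *
      Matrix.diagonal (fun i : Fin l => if (i : ℕ) = l - 1 then β else 1))
    (hgcd : ∀ k : ℕ, 1 ≤ k → k ≤ l - 1 →
      IsGcdMinors B k (∏ i ∈ Finset.univ.filter (fun i : Fin l => (i : ℕ) < k), h i) ∧
      reducedIdeal B k (∏ i ∈ Finset.univ.filter (fun i : Fin l => (i : ℕ) < k), h i) = ⊤) :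
    MatEquiv B (Matrix.diagonal (fun i : Fin l =>
      if (i : ℕ) = l - 1 then h i * α * β else h i)) := by
  obtain ⟨m, rfl⟩ : ∃ m, l = m + 1 := ⟨l - 1, by omega⟩
  have hlast : ∀ i : Fin (m + 1), ((i : ℕ) = m + 1 - 1) = (i = Fin.last m) := by
    intro i
    rw [Fin.ext_iff, Fin.val_last, Nat.add_sub_cancel]
  have hset : {t : Fin n | (t : ℕ) ≠ j - 2} = {t : Fin n | t ≠ ⟨j - 2, by omega⟩} := by
    ext t
    simp [Fin.ext_iff]
  -- the linear factors do not vanish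
  have hlin : ∀ (t : Fin n), j ≤ (t : ℕ) + 2 → (t : ℕ) + 1 ≤ n - 1 →
      (MvPolynomial.X t - f ((t : ℕ) + 1) : MvPolynomial (Fin n) K) ≠ 0 := by
    intro t ht1 ht2 h0
    have h1 := hfsup ((t : ℕ) + 1) (by omega) ht2
    rw [← sub_eq_zero.1 h0, MvPolynomial.X_mem_supported] at h1
    simp at h1
  have hβ' := hlin ⟨j - 2, by omega⟩ (by simp; omega) (by simp; omega)
  have hfj : f (j - 2 + 1) = f (j - 1) := by congr 1; omega
  simp only [hfj] at hβ'
  have hα0 : α ≠ 0 := by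
    rw [hα]
    refine Finset.prod_ne_zero_iff.2 fun t ht => ?_
    simp only [Finset.mem_filter, Finset.mem_univ, true_and] at ht
    exact hlin t (by omega) ht.2
  have hsub : ∀ i, j - 1 ≤ i → i ≤ n - 1 →
      f i ∈ MvPolynomial.supported K {t : Fin n | t ≠ ⟨j - 2, by omega⟩} := by
    intro i hi1 hi2
    refine MvPolynomial.supported_mono ?_ (hfsup i hi1 hi2)
    intro t ht
    simp only [Set.mem_setOf_eq] at ht
    simp only [Set.mem_setOf_eq, ne_eq, Fin.ext_iff]
    omega
  have hαs : α ∈ MvPolynomial.supported K {t : Fin n | t ≠ ⟨j - 2, by omega⟩} := by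
    rw [hα]
    refine Subalgebra.prod_mem _ fun t ht => ?_
    simp only [Finset.mem_filter, Finset.mem_univ, true_and] at ht
    refine Subalgebra.sub_mem _ ?_ (hsub _ (by omega) ht.2)
    rw [MvPolynomial.X_mem_supported]
    simp only [Set.mem_setOf_eq, ne_eq, Fin.ext_iff]
    omega
  simp only [hlast] at hB ⊢
  rw [hset] at hVsup
  have key := QS.mainThm (K := K) (⟨j - 2, by omega⟩ : Fin n) ⟨n - 1, by omega⟩
    (by rw [Ne, Fin.ext_iff]; simp only; omega) m α (f (j - 1)) hα0 hαs
    (hsub _ le_rfl (by omega)) hβ' h hsup hchain V hVsup hVuni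
    (by
      intro k hk1 hk2
      have := (hgcd k hk1 (by omega)).2
      rw [hB, hβ] at this
      exact this)
  rw [← hβ, ← hB, Matrix.diagonal_mul_diagonal] at key
  convert key using 3 with i
  split_ifs <;> simp
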